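/- arXiv:1212.2107 — 2 statements merged into one kernel-verified Lean document; each statement's English description precedes it below -/
import Mathlib

section
/- For every η ∈ (0,1), q ∈ [2,∞) and p ∈ (1,q] there exists a constant K = K(η,p,q) ∈ (0,∞) with the following property. If (X,‖·‖_X) is a Banach space satisfying δ_X(ε) ≥ (ηε)^q for every ε ∈ (0,1), then for every n ∈ ℕ and every f : ℍ → X one has (∑_{k=1}^{n²} k^{−1−q/2} (∑_{x ∈ B_n} ‖f(xc^k) − f(x)‖_X^p)^{q/p})^{1/q} ≤ K (∑_{x ∈ B_{21n}} (‖f(xa) − f(x)‖_X^p + ‖f(xb) − f(x)‖_X^p))^{1/p}. -/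
/-- The discrete Heisenberg group, as ℤ³ with the Heisenberg multiplication
(equivalently, unit upper-triangular 3×3 integer matrices). -/
@[ext]
structure DH where
  x : ℤ
  y : ℤ
  z : ℤ

namespace DH

instance : Mul DH := ⟨fun a b => ⟨a.x + b.x, a.y + b.y, a.z + b.z + a.x * b.y⟩⟩
instance : One DH := ⟨⟨0, 0, 0⟩⟩
instance : Inv DH := ⟨fun a => ⟨-a.x, -a.y, -a.z + a.x * a.y⟩⟩

lemma mul_def (a b : DH) : a * b = ⟨a.x + b.x, a.y + b.y, a.z + b.z + a.x * b.y⟩ := rfl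
lemma one_def : (1 : DH) = ⟨0, 0, 0⟩ := rfl
lemma inv_def (a : DH) : a⁻¹ = ⟨-a.x, -a.y, -a.z + a.x * a.y⟩ := rfl

instance : Group DH where
  mul_assoc a b c := by
    simp only [mul_def, mk.injEq]
    refine ⟨by ring, by ring, by ring⟩
  one_mul a := by simp [mul_def, one_def]
  mul_one a := by simp [mul_def, one_def]
  inv_mul_cancel a := by
    simp only [mul_def, inv_def, one_def, mk.injEq]
    refine ⟨by ring, by ring, by ring⟩

/-- The generator `a`. -/
def gA : DH := ⟨1, 0, 0⟩

/-- The generator `b`. -/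
def gB : DH := ⟨0, 1, 0⟩

/-- The commutator `c = aba⁻¹b⁻¹`, a generator of the center. -/
def gC : DH := gA * gB * gA⁻¹ * gB⁻¹

/-- Word length with respect to the symmetric generating set `{a, b, a⁻¹, b⁻¹}`. -/
noncomputable def wordLen (g : DH) : ℕ :=
  sInf {n | ∃ l : List DH, l.length = n ∧
    (∀ s ∈ l, s ∈ ({gA, gB, gA⁻¹, gB⁻¹} : Set DH)) ∧ l.prod = g}

/-- The left-invariant word metric on the discrete Heisenberg group. -/
noncomputable def dW (g h : DH) : ℕ := wordLen (g⁻¹ * h)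

/-- The closed ball of radius `n` centered at the identity. -/
def Ball (n : ℕ) : Set DH := {g | dW g 1 ≤ n}

end DH

/-!
Let `T` be the translation `f ↦ f (· * c)` and `A n` the average of `1, T, …, T ^ (n - 1)`. Since
`A (2 * n)` is the midpoint of `A n` and `T ^ n * A n`, uniform convexity of `ℓ_p(X)` bounds the
`q`-th powers of the differences of `A (2 ^ j)`, over all `j`, by a single `ℓ_p(X)` norm, as in
Pisier's martingale inequality. As `c` is central, this applies to the horizontal gradient of `f`.
As `c ^ k` has word length `O(√k)`, the operator `T ^ k - 1` costs at most `√k` times the horizontal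
gradient, which carries the bound over to the differences of averages of `f` itself, with weight
`2 ^ (-j / 2)` at scale `2 ^ j`. Two discrete Hardy inequalities then sum the scales. The seminorms
live on growing domains, because each translation moves the ball.
-/

section RealInequalities

lemma rpow_sub_le_rpow_sub_mul {a h s : ℝ} (hh : 0 ≤ h) (hha : h ≤ a) (hs : 1 ≤ s) :
    (a - h) ^ s ≤ a ^ s - a ^ (s - 1) * h := by
  have hah : 0 ≤ a - h := sub_nonneg.2 hha
  have hpow {x : ℝ} (hx : 0 ≤ x) : x ^ s = x ^ (s - 1) * x := by
    rw [← Real.rpow_add_one' hx (by linarith), sub_add_cancel]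
  calc (a - h) ^ s = (a - h) ^ (s - 1) * (a - h) := hpow hah
    _ ≤ a ^ (s - 1) * (a - h) := by
        gcongr
        linarith
    _ = a ^ s - a ^ (s - 1) * h := by rw [hpow (hh.trans hha), mul_sub]

lemma rpow_midpoint_le {p x y : ℝ} (hp : 1 ≤ p) (hx : 0 ≤ x) (hy : 0 ≤ y) :
    ((x + y) / 2) ^ p ≤ (x ^ p + y ^ p) / 2 := by
  have h := (convexOn_rpow hp).2 hx hy one_half_pos.le one_half_pos.le (add_halves 1)
  simp only [smul_eq_mul] at h
  calc ((x + y) / 2) ^ p = (1 / 2 * x + 1 / 2 * y) ^ p := by ring_nf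
    _ ≤ 1 / 2 * x ^ p + 1 / 2 * y ^ p := h
    _ = (x ^ p + y ^ p) / 2 := by ring

/- Bernoulli's inequality for the exponent `2 - p ∈ [0, 1)` makes each power rational; the average
of the two resulting fractions is `1 + (p - 1) ^ 2 * s ^ 2 / (1 - (2 - p) ^ 2 * s ^ 2)`. -/
lemma one_add_sq_le_rpow_midpoint_of_le_two {p s : ℝ} (hp : 1 < p) (hp2 : p ≤ 2)
    (hs : s ∈ Set.Icc (0 : ℝ) 1) :
    1 + (p - 1) ^ 2 * s ^ 2 ≤ ((1 + s) ^ p + (1 - s) ^ p) / 2 := by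
  have bernoulli {t : ℝ} (ht : -1 ≤ t) (hpos : 0 < 1 + (2 - p) * t) :
      (1 + t) ^ 2 / (1 + (2 - p) * t) ≤ (1 + t) ^ p := by
    have h1t : 0 ≤ 1 + t := by linarith
    rw [div_le_iff₀ hpos]
    calc (1 + t) ^ 2 = (1 + t) ^ p * (1 + t) ^ (2 - p) := by
          rw [← Real.rpow_add_of_nonneg h1t (by linarith) (by linarith), add_sub_cancel,
            Real.rpow_two]
      _ ≤ (1 + t) ^ p * (1 + (2 - p) * t) := by
          gcongr
          exact rpow_one_add_le_one_add_mul_self ht (by linarith) (by linarith)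
  have hpos : 0 < 1 + (2 - p) * s := by nlinarith [hs.1]
  have hneg : 0 < 1 + (2 - p) * -s := by nlinarith [hs.2]
  have hden : 0 < 1 - (2 - p) ^ 2 * s ^ 2 := by nlinarith [mul_pos hpos hneg]
  calc 1 + (p - 1) ^ 2 * s ^ 2
      ≤ 1 + (p - 1) ^ 2 * s ^ 2 / (1 - (2 - p) ^ 2 * s ^ 2) := by
        gcongr
        exact le_div_self (by positivity) hden (by nlinarith [sq_nonneg ((2 - p) * s)])
    _ = ((1 + s) ^ 2 / (1 + (2 - p) * s) + (1 + -s) ^ 2 / (1 + (2 - p) * -s)) / 2 := by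
        rw [div_add_div _ _ hpos.ne' hneg.ne', div_div,
          show 1 - (2 - p) ^ 2 * s ^ 2 = (1 + (2 - p) * s) * (1 + (2 - p) * -s) by ring,
          eq_div_iff (by positivity), add_mul, ← mul_assoc (_ / _),
          div_mul_cancel₀ _ (by positivity)]
        ring
    _ ≤ ((1 + s) ^ p + (1 + -s) ^ p) / 2 := by
        gcongr
        exacts [bernoulli (by linarith [hs.1]) hpos, bernoulli (by linarith [hs.2]) hneg]

lemma one_add_sq_le_rpow_midpoint_of_two_le {p s : ℝ} (hp : 2 ≤ p) (hs : s ∈ Set.Icc (0 : ℝ) 1) :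
    1 + s ^ 2 ≤ ((1 + s) ^ p + (1 - s) ^ p) / 2 := by
  have hsq {x : ℝ} (hx : 0 ≤ x) : (x ^ 2) ^ (p / 2) = x ^ p := by
    rw [← Real.rpow_natCast_mul hx, Nat.cast_two, mul_div_cancel₀ p two_ne_zero]
  have hmean := rpow_midpoint_le (p := p / 2) (by linarith) (sq_nonneg (1 + s)) (sq_nonneg (1 - s))
  rw [hsq (by linarith [hs.1]), hsq (by linarith [hs.2])] at hmean
  calc 1 + s ^ 2 ≤ 1 + p / 2 * s ^ 2 := by nlinarith [sq_nonneg s]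
    _ ≤ (1 + s ^ 2) ^ (p / 2) :=
        one_add_mul_self_le_rpow_one_add (by nlinarith [sq_nonneg s]) (by linarith)
    _ = (((1 + s) ^ 2 + (1 - s) ^ 2) / 2) ^ (p / 2) := by ring_nf
    _ ≤ _ := hmean

lemma exists_mul_sq_le_rpow_midpoint {p : ℝ} (hp : 1 < p) :
    ∃ c > 0, ∀ s ∈ Set.Icc (0 : ℝ) 1, 1 + c * s ^ 2 ≤ ((1 + s) ^ p + (1 - s) ^ p) / 2 := by
  rcases le_total p 2 with hp2 | hp2
  · exact ⟨(p - 1) ^ 2, pow_pos (sub_pos.2 hp) 2,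
      fun s hs ↦ one_add_sq_le_rpow_midpoint_of_le_two hp hp2 hs⟩
  · exact ⟨1, one_pos, fun s hs ↦ by
      simpa only [one_mul] using one_add_sq_le_rpow_midpoint_of_two_le hp2 hs⟩

lemma exists_rpow_midpoint_add_mul_sq_le {p : ℝ} (hp : 1 < p) :
    ∃ c > 0, ∀ r ∈ Set.Icc (0 : ℝ) 1,
      ((1 + r) / 2) ^ p + c * (1 - r) ^ 2 ≤ (1 + r ^ p) / 2 := by
  obtain ⟨c, hc, hgap⟩ := exists_mul_sq_le_rpow_midpoint hp
  refine ⟨(1 / 2) ^ p * (c * (1 / 2) ^ 2), by positivity, fun r ⟨hr0, hr1⟩ ↦ ?_⟩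
  set m := (1 + r) / 2 with hm
  set s := (1 - r) / (1 + r) with hs
  have hs0 : 0 ≤ s := div_nonneg (by linarith) (by linarith)
  have hs1 : s ≤ 1 := (div_le_one (by linarith)).2 (by linarith)
  have hone : m * (1 + s) = 1 := by rw [hm, hs]; field_simp; ring
  have hr : m * (1 - s) = r := by rw [hm, hs]; field_simp; ring
  calc m ^ p + (1 / 2) ^ p * (c * (1 / 2) ^ 2) * (1 - r) ^ 2
      = m ^ p + (1 / 2) ^ p * (c * ((1 - r) / 2) ^ 2) := by ring
    _ ≤ m ^ p + m ^ p * (c * s ^ 2) := by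
        gcongr _ + ?_ ^ p * (c * ?_ ^ 2)
        · linarith
        · exact div_le_div_of_nonneg_left (by linarith) (by linarith) (by linarith)
    _ = m ^ p * (1 + c * s ^ 2) := by ring
    _ ≤ m ^ p * (((1 + s) ^ p + (1 - s) ^ p) / 2) := by
        gcongr
        exact hgap s ⟨hs0, hs1⟩
    _ = ((m * (1 + s)) ^ p + (m * (1 - s)) ^ p) / 2 := by
        rw [Real.mul_rpow (by positivity) (by linarith),
          Real.mul_rpow (by positivity) (by linarith)]
        ring
    _ = (1 + r ^ p) / 2 := by rw [hone, hr, Real.one_rpow]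

/- Hölder's inequality with weights `M i ^ p`. -/
lemma sum_rpow_rpow_le_mul_sum {ι : Type*} (s : Finset ι) {p q : ℝ} (hp : 0 < p) (hpq : p ≤ q)
    {a M : ι → ℝ} (ha : ∀ i, 0 ≤ a i) (hM : ∀ i, 0 ≤ M i) (haM : ∀ i, M i = 0 → a i = 0) :
    (∑ i ∈ s, a i ^ p) ^ (q / p) ≤
      (∑ i ∈ s, M i ^ p) ^ (q / p - 1) * ∑ i ∈ s, a i ^ q * M i ^ (p - q) := by
  set θ := q / p with hθ
  have hθ1 : 1 ≤ θ := (one_le_div₀ hp).2 hpq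
  have hθ0 : θ ≠ 0 := by positivity
  have hq : q ≠ 0 := (hp.trans_le hpq).ne'
  have hdiv (i) : 0 ≤ a i / M i := div_nonneg (ha i) (hM i)
  have hweight (i) : M i ^ p * (a i / M i) ^ p = a i ^ p := by
    rw [← Real.mul_rpow (hM i) (hdiv i), mul_div_cancel_of_imp' (haM i)]
  have hweight' (i) : M i ^ p * ((a i / M i) ^ p) ^ θ = a i ^ q * M i ^ (p - q) := by
    rw [← Real.rpow_mul (hdiv i), hθ, mul_div_cancel₀ _ hp.ne']
    rcases (hM i).eq_or_lt' with h0 | hpos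
    · rw [haM i h0, h0, Real.zero_rpow hp.ne', Real.zero_rpow hq, zero_mul, zero_mul]
    · rw [Real.div_rpow (ha i) (hM i), Real.rpow_sub hpos]
      ring
  have hQ : 0 ≤ ∑ i ∈ s, a i ^ q * M i ^ (p - q) := Finset.sum_nonneg fun i _ ↦
    mul_nonneg (Real.rpow_nonneg (ha i) q) (Real.rpow_nonneg (hM i) _)
  have hMsum : 0 ≤ ∑ i ∈ s, M i ^ p := Finset.sum_nonneg fun i _ ↦ Real.rpow_nonneg (hM i) p
  have holder := Real.inner_le_weight_mul_Lp_of_nonneg s hθ1 (fun i ↦ M i ^ p)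
    (fun i ↦ (a i / M i) ^ p) (fun i ↦ Real.rpow_nonneg (hM i) p)
    (fun i ↦ Real.rpow_nonneg (hdiv i) p)
  simp only [hweight, hweight'] at holder
  calc (∑ i ∈ s, a i ^ p) ^ θ
      ≤ ((∑ i ∈ s, M i ^ p) ^ (1 - θ⁻¹) * (∑ i ∈ s, a i ^ q * M i ^ (p - q)) ^ θ⁻¹) ^ θ := by
        gcongr
        exact Finset.sum_nonneg fun i _ ↦ Real.rpow_nonneg (ha i) p
    _ = (∑ i ∈ s, M i ^ p) ^ (θ - 1) * ∑ i ∈ s, a i ^ q * M i ^ (p - q) := by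
        rw [Real.mul_rpow (by positivity) (by positivity), ← Real.rpow_mul hMsum,
          Real.rpow_inv_rpow hQ hθ0, sub_mul, inv_mul_cancel₀ hθ0, one_mul]

lemma rpow_mul_add_le {r q x y : ℝ} (hr0 : 0 ≤ r) (hr1 : r < 1) (hq : 1 ≤ q) (hx : 0 ≤ x)
    (hy : 0 ≤ y) :
    (r * x + y) ^ q ≤ r * x ^ q + (1 - r) * ((1 - r) ^ (-q) * y ^ q) := by
  have h1r : 0 < 1 - r := sub_pos.2 hr1
  have h := (convexOn_rpow hq).2 hx (div_nonneg hy h1r.le) hr0 h1r.le (add_sub_cancel r 1)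
  simp only [smul_eq_mul, mul_div_cancel₀ _ h1r.ne'] at h
  rwa [Real.div_rpow hy h1r.le, div_eq_inv_mul, ← Real.rpow_neg h1r.le] at h

/- A discrete Hardy inequality. The convexity bound `rpow_mul_add_le` makes
`(1 - r) * ∑ j ≤ J, x j ^ q + r * x J ^ q` telescope. -/
lemma sum_rpow_le_of_le_mul_add {r q : ℝ} (hr0 : 0 ≤ r) (hr1 : r < 1) (hq : 1 ≤ q) {x y : ℕ → ℝ}
    (hx : ∀ j, 0 ≤ x j) (hy : ∀ j, 0 ≤ y j) {J : ℕ} (h0 : x 0 ≤ y 0)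
    (hsucc : ∀ j < J, x (j + 1) ≤ r * x j + y (j + 1)) :
    ∑ j ∈ Finset.range (J + 1), x j ^ q ≤ (1 - r) ^ (-q) * ∑ j ∈ Finset.range (J + 1), y j ^ q := by
  have h1r : 0 < 1 - r := sub_pos.2 hr1
  set C := (1 - r) ^ (-q) with hC
  suffices H : ∀ i ≤ J, (1 - r) * ∑ j ∈ Finset.range (i + 1), x j ^ q + r * x i ^ q ≤
      (1 - r) * (C * ∑ j ∈ Finset.range (i + 1), y j ^ q) by
    refine le_of_mul_le_mul_left ?_ h1r
    linarith [H J le_rfl, mul_nonneg hr0 (Real.rpow_nonneg (hx J) q)]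
  intro i hi
  induction i with
  | zero =>
    have hC1 : 1 ≤ (1 - r) * C := by
      rw [hC]
      nth_rewrite 1 [← Real.rpow_one (1 - r)]
      rw [← Real.rpow_add h1r]
      exact Real.one_le_rpow_of_pos_of_le_one_of_nonpos h1r (by linarith) (by linarith)
    have hpow : x 0 ^ q ≤ y 0 ^ q := Real.rpow_le_rpow (hx 0) h0 (by linarith)
    simp only [zero_add, Finset.sum_range_one]
    nlinarith [Real.rpow_nonneg (hy 0) q]
  | succ i ih =>
    have hstep : x (i + 1) ^ q ≤ r * x i ^ q + (1 - r) * (C * y (i + 1) ^ q) :=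
      (Real.rpow_le_rpow (hx _) (hsucc i hi) (by linarith)).trans
        (rpow_mul_add_le hr0 hr1 hq (hx i) (hy (i + 1)))
    rw [Finset.sum_range_succ, Finset.sum_range_succ _ (i + 1)]
    linarith [ih (by lia)]

lemma sum_rpow_le_of_le_mul_succ_add {r q : ℝ} (hr0 : 0 ≤ r) (hr1 : r < 1) (hq : 1 ≤ q)
    {x y : ℕ → ℝ} (hx : ∀ j, 0 ≤ x j) (hy : ∀ j, 0 ≤ y j) {J : ℕ} (hJ : x J ≤ y J)
    (hpred : ∀ j < J, x j ≤ r * x (j + 1) + y j) :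
    ∑ j ∈ Finset.range (J + 1), x j ^ q ≤ (1 - r) ^ (-q) * ∑ j ∈ Finset.range (J + 1), y j ^ q := by
  rw [← Finset.sum_range_reflect, ← Finset.sum_range_reflect (fun j ↦ y j ^ q)]
  refine sum_rpow_le_of_le_mul_add hr0 hr1 hq (fun j ↦ hx _) (fun j ↦ hy _) (by simpa using hJ)
    fun j hj ↦ ?_
  have h := hpred (J - (j + 1)) (by lia)
  rwa [show J - (j + 1) + 1 = J - j by lia] at h

lemma sum_rpow_mul_sum_le {r q : ℝ} (hr0 : 0 ≤ r) (hr1 : r < 1) (hq : 1 ≤ q) {e : ℕ → ℝ}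
    (he : ∀ j, 0 ≤ e j) (J : ℕ) :
    ∑ j ∈ Finset.range (J + 1), (r ^ j * ∑ i ∈ Finset.range (j + 1), e i) ^ q ≤
      (1 - r) ^ (-q) * ∑ j ∈ Finset.range (J + 1), (r ^ j * e j) ^ q := by
  refine sum_rpow_le_of_le_mul_add hr0 hr1 hq
    (fun j ↦ mul_nonneg (pow_nonneg hr0 j) (Finset.sum_nonneg fun i _ ↦ he i))
    (fun j ↦ mul_nonneg (pow_nonneg hr0 j) (he j)) (by simp) fun j _ ↦ le_of_eq ?_
  rw [Finset.sum_range_succ _ (j + 1)]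
  ring

lemma card_filter_log_two_eq_le (s : Finset ℕ) (hs : 0 ∉ s) (j : ℕ) :
    {k ∈ s | Nat.log 2 k = j}.card ≤ 2 ^ j := by
  have hsub : {k ∈ s | Nat.log 2 k = j} ⊆ Finset.Ico (2 ^ j) (2 ^ (j + 1)) := by
    intro k hk
    obtain ⟨hks, rfl⟩ := Finset.mem_filter.1 hk
    exact Finset.mem_Ico.2 ⟨Nat.pow_log_le_self 2 (ne_of_mem_of_not_mem hks hs),
      Nat.lt_pow_succ_log_self one_lt_two k⟩
  calc _ ≤ (Finset.Ico (2 ^ j) (2 ^ (j + 1))).card := Finset.card_le_card hsub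
    _ = 2 ^ j := by rw [Nat.card_Ico, pow_succ]; lia

lemma sum_rpow_mul_le_sum_dyadic {s : ℝ} (hs : -1 ≤ s) {R : ℕ} {a b : ℕ → ℝ} (hb : ∀ j, 0 ≤ b j)
    (hab : ∀ k ∈ Finset.Icc 1 R, a k ≤ b (Nat.log 2 k)) :
    ∑ k ∈ Finset.Icc 1 R, (k : ℝ) ^ (-1 - s) * a k ≤
      ∑ j ∈ Finset.range (Nat.log 2 R + 1), ((2 : ℝ) ^ j) ^ (-s) * b j := by
  have hmaps : ∀ k ∈ Finset.Icc 1 R, Nat.log 2 k ∈ Finset.range (Nat.log 2 R + 1) := fun k hk ↦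
    Finset.mem_range_succ_iff.2 (Nat.log_mono_right (Finset.mem_Icc.1 hk).2)
  rw [← Finset.sum_fiberwise_of_maps_to hmaps]
  refine Finset.sum_le_sum fun j _ ↦ ?_
  have hterm : ∀ k ∈ {k ∈ Finset.Icc 1 R | Nat.log 2 k = j},
      (k : ℝ) ^ (-1 - s) * a k ≤ ((2 : ℝ) ^ j) ^ (-1 - s) * b j := by
    intro k hk
    obtain ⟨hkR, rfl⟩ := Finset.mem_filter.1 hk
    have hpow : (2 : ℝ) ^ Nat.log 2 k ≤ k := mod_cast
      Nat.pow_log_le_self 2 (Nat.one_le_iff_ne_zero.1 (Finset.mem_Icc.1 hkR).1)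
    calc (k : ℝ) ^ (-1 - s) * a k ≤ (k : ℝ) ^ (-1 - s) * b (Nat.log 2 k) := by
          gcongr
          exact hab k hkR
      _ ≤ ((2 : ℝ) ^ Nat.log 2 k) ^ (-1 - s) * b (Nat.log 2 k) :=
          mul_le_mul_of_nonneg_right
            (Real.rpow_le_rpow_of_nonpos (by positivity) hpow (by linarith)) (hb _)
  have hcard : ({k ∈ Finset.Icc 1 R | Nat.log 2 k = j}.card : ℝ) ≤ 2 ^ j :=
    mod_cast card_filter_log_two_eq_le _ (by simp) j
  calc ∑ k ∈ Finset.Icc 1 R with Nat.log 2 k = j, (k : ℝ) ^ (-1 - s) * a k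
      ≤ {k ∈ Finset.Icc 1 R | Nat.log 2 k = j}.card • (((2 : ℝ) ^ j) ^ (-1 - s) * b j) :=
        Finset.sum_le_card_nsmul _ _ _ hterm
    _ ≤ 2 ^ j * (((2 : ℝ) ^ j) ^ (-1 - s) * b j) := by
        rw [nsmul_eq_mul]
        have := hb j
        gcongr
    _ = ((2 : ℝ) ^ j) ^ (-s) * b j := by
        rw [← mul_assoc, sub_eq_add_neg, Real.rpow_add (by positivity), Real.rpow_neg_one,
          mul_inv_cancel_left₀ (by positivity)]

end RealInequalities

section UniformConvexity

universe u v

/-- The modulus of uniform convexity of `X` is of power type `q` with constant `η`, that is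
`δ_X(ε) ≥ (η ε) ^ q` for all `ε ∈ (0, 1)`. -/
def HasPowerModulus (η q : ℝ) (X : Type*) [NormedAddCommGroup X] : Prop :=
  ∀ ε ∈ Set.Ioo (0 : ℝ) 1, ∀ x y : X, ‖x‖ = 1 → ‖y‖ = 1 → ε ≤ ‖x - y‖ →
    ‖x + y‖ ≤ 2 * (1 - (η * ε) ^ q)

section TwoPoint

variable {X : Type*} [NormedAddCommGroup X] [NormedSpace ℝ X] {η q : ℝ}

lemma norm_midpoint_le (x y : X) : ‖(1 / 2 : ℝ) • (x + y)‖ ≤ (‖x‖ + ‖y‖) / 2 := by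
  rw [norm_smul, Real.norm_of_nonneg one_half_pos.le, one_div_mul_eq_div]
  gcongr
  exact norm_add_le x y

lemma HasPowerModulus.norm_midpoint_le (hX : HasPowerModulus η q X) {ε : ℝ}
    (hε : ε ∈ Set.Ioo (0 : ℝ) 1) {x y : X} (hx : ‖x‖ = 1) (hy0 : y ≠ 0) (hy1 : ‖y‖ ≤ 1)
    (hsep : ε + (1 - ‖y‖) ≤ ‖x - y‖) :
    ‖(1 / 2 : ℝ) • (x + y)‖ ≤ (1 + ‖y‖) / 2 - ‖y‖ * (η * ε) ^ q := by
  obtain ⟨y', hy', hyy'⟩ : ∃ y' : X, ‖y'‖ = 1 ∧ y = ‖y‖ • y' :=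
    ⟨‖y‖⁻¹ • y, norm_smul_inv_norm (𝕜 := ℝ) hy0,
      (smul_inv_smul₀ (norm_ne_zero_iff.2 hy0) y).symm⟩
  set r := ‖y‖
  have hr : 0 ≤ r := norm_nonneg y
  have hdist : ‖y' - y‖ = 1 - r := by
    rw [hyy', show y' - r • y' = (1 - r) • y' by module, norm_smul, hy', mul_one,
      Real.norm_of_nonneg (by linarith)]
  have hsum : ‖x + y'‖ ≤ 2 * (1 - (η * ε) ^ q) :=
    hX ε hε x y' hx hy' (by linarith [norm_sub_le_norm_sub_add_norm_sub x y' y])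
  calc ‖(1 / 2 : ℝ) • (x + y)‖ = ‖(r / 2) • (x + y') + ((1 - r) / 2) • x‖ := by
        rw [hyy']
        congr 1
        module
    _ ≤ ‖(r / 2) • (x + y')‖ + ‖((1 - r) / 2) • x‖ := norm_add_le _ _
    _ = r / 2 * ‖x + y'‖ + (1 - r) / 2 := by
        rw [norm_smul, norm_smul, hx, mul_one, Real.norm_of_nonneg (by linarith),
          Real.norm_of_nonneg (by linarith)]
    _ ≤ r / 2 * (2 * (1 - (η * ε) ^ q)) + (1 - r) / 2 := by gcongr
    _ = (1 + r) / 2 - r * (η * ε) ^ q := by ring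

lemma HasPowerModulus.norm_midpoint_rpow_add_le (hX : HasPowerModulus η q X) (hη : 0 < η) {p : ℝ}
    (hp : 1 ≤ p) {ε : ℝ} (hε : ε ∈ Set.Ioo (0 : ℝ) 1) {x y : X} (hx : ‖x‖ = 1)
    (hy0 : 1 / 2 ≤ ‖y‖) (hy1 : ‖y‖ ≤ 1) (hsep : ε + (1 - ‖y‖) ≤ ‖x - y‖) :
    ‖(1 / 2 : ℝ) • (x + y)‖ ^ p + (1 / 2) ^ p * (η * ε) ^ q ≤ (1 + ‖y‖ ^ p) / 2 := by
  have hδ : 0 ≤ (η * ε) ^ q := Real.rpow_nonneg (mul_nonneg hη.le hε.1.le) q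
  have hmid := hX.norm_midpoint_le hε hx (norm_pos_iff.1 (by linarith)) hy1 hsep
  have hmean := rpow_midpoint_le hp zero_le_one (norm_nonneg y)
  rw [Real.one_rpow] at hmean
  have hgain : (1 / 2) ^ p * (η * ε) ^ q ≤ ((1 + ‖y‖) / 2) ^ (p - 1) * (‖y‖ * (η * ε) ^ q) :=
    calc (1 / 2) ^ p * (η * ε) ^ q = (1 / 2) ^ (p - 1) * (1 / 2 * (η * ε) ^ q) := by
          rw [Real.rpow_sub_one (by norm_num)]
          ring
      _ ≤ ((1 + ‖y‖) / 2) ^ (p - 1) * (‖y‖ * (η * ε) ^ q) := by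
          gcongr
          linarith
  calc ‖(1 / 2 : ℝ) • (x + y)‖ ^ p + (1 / 2) ^ p * (η * ε) ^ q
      ≤ ((1 + ‖y‖) / 2 - ‖y‖ * (η * ε) ^ q) ^ p +
          ((1 + ‖y‖) / 2) ^ (p - 1) * (‖y‖ * (η * ε) ^ q) := by gcongr
    _ ≤ ((1 + ‖y‖) / 2) ^ p := by
        have hle : ‖y‖ * (η * ε) ^ q ≤ (1 + ‖y‖) / 2 := sub_nonneg.1 ((norm_nonneg _).trans hmid)
        linarith [rpow_sub_le_rpow_sub_mul (mul_nonneg (norm_nonneg y) hδ) hle hp]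
    _ ≤ (1 + ‖y‖ ^ p) / 2 := hmean

end TwoPoint

lemma exists_norm_midpoint_rpow_add_le {η p q : ℝ} (hη : 0 < η) (hp : 1 < p) (hq : 2 ≤ q) :
    ∃ κ > 0, ∀ (X : Type u) [NormedAddCommGroup X] [NormedSpace ℝ X], HasPowerModulus η q X →
      ∀ x y : X, ‖x‖ = 1 → ‖y‖ ≤ 1 →
        ‖(1 / 2 : ℝ) • (x + y)‖ ^ p + κ * ‖x - y‖ ^ q ≤ (1 + ‖y‖ ^ p) / 2 := by
  obtain ⟨c, hc, hgap⟩ := exists_rpow_midpoint_add_mul_sq_le hp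
  refine ⟨min (c * (1 / 4) ^ q) ((1 / 2) ^ p * (η * (1 / 4)) ^ q), by positivity,
    fun X _ _ hX x y hx hy ↦ ?_⟩
  set d := ‖x - y‖
  have hd0 : 0 ≤ d := norm_nonneg _
  have hd2 : d ≤ 2 := (norm_sub_le x y).trans (by linarith)
  -- `x` and `y` are far apart either because `‖y‖` is small, or because their directions differ.
  rcases le_or_gt (d / 4) (1 - ‖y‖) with hradial | hangular
  · calc _ ≤ ((1 + ‖y‖) / 2) ^ p + c * (1 - ‖y‖) ^ 2 := ?_
      _ ≤ (1 + ‖y‖ ^ p) / 2 := hgap _ ⟨norm_nonneg y, hy⟩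
    gcongr ?_ ^ p + ?_
    · exact hx ▸ norm_midpoint_le x y
    · calc _ ≤ c * (1 / 4) ^ q * d ^ q := by
            gcongr
            exact min_le_left _ _
        _ = c * (d / 4) ^ q := by
            rw [mul_assoc, ← Real.mul_rpow (by norm_num) hd0, one_div_mul_eq_div]
        _ ≤ c * (d / 4) ^ (2 : ℝ) := by
            gcongr 1
            exact Real.rpow_le_rpow_of_exponent_ge' (by positivity) (by linarith) (by norm_num) hq
        _ ≤ c * (1 - ‖y‖) ^ 2 := by
            rw [Real.rpow_two]
            gcongr
  · refine (add_le_add_right ?_ _).trans (hX.norm_midpoint_rpow_add_le hη hp.le (ε := d / 4)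
      ⟨by linarith, by linarith⟩ hx (by linarith) hy (by linarith))
    calc _ ≤ (1 / 2) ^ p * (η * (1 / 4)) ^ q * d ^ q := by
          gcongr
          exact min_le_right _ _
      _ = (1 / 2) ^ p * (η * (d / 4)) ^ q := by
          rw [mul_assoc, ← Real.mul_rpow (by positivity) hd0, mul_assoc, one_div_mul_eq_div]

lemma exists_norm_midpoint_rpow_add_mul_max_le {η p q : ℝ} (hη : 0 < η) (hp : 1 < p)
    (hq : 2 ≤ q) :
    ∃ κ > 0, ∀ (X : Type u) [NormedAddCommGroup X] [NormedSpace ℝ X], HasPowerModulus η q X →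
      ∀ x y : X, ‖(1 / 2 : ℝ) • (x + y)‖ ^ p + κ * (‖x - y‖ ^ q * max ‖x‖ ‖y‖ ^ (p - q)) ≤
        (‖x‖ ^ p + ‖y‖ ^ p) / 2 := by
  obtain ⟨κ, hκ, hunit⟩ := exists_norm_midpoint_rpow_add_le hη hp hq
  refine ⟨κ, hκ, fun X _ _ hX x y ↦ ?_⟩
  wlog hyx : ‖y‖ ≤ ‖x‖ generalizing x y with H
  · rw [norm_sub_rev, add_comm x, max_comm, add_comm (‖x‖ ^ p)]
    exact H y x (le_of_not_ge hyx)
  rw [max_eq_left hyx]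
  rcases eq_or_ne x 0 with rfl | hx
  · obtain rfl : y = 0 := by simpa using hyx
    simp [Real.zero_rpow (by linarith : p ≠ 0), Real.zero_rpow (by linarith : q ≠ 0)]
  have hpos : 0 < ‖x‖ := norm_pos_iff.2 hx
  set s := ‖x‖
  have hscale (z : X) (t : ℝ) : ‖z‖ ^ t = s ^ t * ‖s⁻¹ • z‖ ^ t := by
    rw [norm_smul, norm_inv, Real.norm_of_nonneg hpos.le,
      ← Real.mul_rpow hpos.le (by positivity), mul_inv_cancel_left₀ hpos.ne']
  have hnormx : ‖s⁻¹ • x‖ = 1 := norm_smul_inv_norm (𝕜 := ℝ) hx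
  have hnormy : ‖s⁻¹ • y‖ ≤ 1 := by
    rwa [norm_smul, norm_inv, Real.norm_of_nonneg hpos.le, inv_mul_le_one₀ hpos]
  have h := hunit X hX _ _ hnormx hnormy
  rw [← smul_sub, ← smul_add, smul_comm] at h
  calc _ = s ^ p * (‖s⁻¹ • (1 / 2 : ℝ) • (x + y)‖ ^ p + κ * ‖s⁻¹ • (x - y)‖ ^ q) := by
        rw [hscale, hscale (x - y), Real.rpow_sub hpos]
        field_simp
    _ ≤ s ^ p * ((1 + ‖s⁻¹ • y‖ ^ p) / 2) := by gcongr
    _ = (s ^ p + ‖y‖ ^ p) / 2 := by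
        rw [hscale y]
        ring

/-- A seminorm whose unit ball is uniformly convex of power type `q`: the midpoint of `u` and `v`
gains `κ * N (u - v) ^ q` over the larger of `N u ^ q` and `N v ^ q`. -/
def HasMidpointGap {E : Type*} [AddCommGroup E] [Module ℝ E] (κ q : ℝ) (N : Seminorm ℝ E) : Prop :=
  ∀ u v, N ((1 / 2 : ℝ) • (u + v)) ^ q + κ * N (u - v) ^ q ≤ max (N u) (N v) ^ q

section lpSeminorm

variable {ι X : Type*} [NormedAddCommGroup X] [NormedSpace ℝ X] {p : ℝ} (hp : 1 ≤ p)

/-- The `ℓ_p`-norm of the restriction of an `X`-valued function to a finite set. -/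
noncomputable def lpSeminorm (s : Finset ι) : Seminorm ℝ (ι → X) :=
  Seminorm.of (fun g ↦ (∑ x ∈ s, ‖g x‖ ^ p) ^ (1 / p))
    (fun g g' ↦ by
      refine le_trans ?_ (Real.Lp_add_le_of_nonneg s hp (fun x _ ↦ norm_nonneg (g x))
        (fun x _ ↦ norm_nonneg (g' x)))
      gcongr
      exact norm_add_le _ _)
    (fun c g ↦ by
      simp only [Pi.smul_apply, norm_smul, Real.mul_rpow (norm_nonneg _) (norm_nonneg _)]
      rw [← Finset.mul_sum, Real.mul_rpow (by positivity) (by positivity),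
        ← Real.rpow_mul (norm_nonneg _), mul_one_div_cancel (by linarith), Real.rpow_one])

lemma lpSeminorm_apply (s : Finset ι) (g : ι → X) :
    lpSeminorm hp s g = (∑ x ∈ s, ‖g x‖ ^ p) ^ (1 / p) := rfl

lemma lpSeminorm_rpow (s : Finset ι) (g : ι → X) (q : ℝ) :
    lpSeminorm hp s g ^ q = (∑ x ∈ s, ‖g x‖ ^ p) ^ (q / p) := by
  rw [lpSeminorm_apply, ← Real.rpow_mul (by positivity), one_div_mul_eq_div]

lemma lpSeminorm_rpow_self (s : Finset ι) (g : ι → X) :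
    lpSeminorm hp s g ^ p = ∑ x ∈ s, ‖g x‖ ^ p := by
  rw [lpSeminorm_rpow, div_self (by linarith), Real.rpow_one]

lemma lpSeminorm_le_of_injOn {ι' : Type*} {s : Finset ι} {s' : Finset ι'} {φ : ι → ι'}
    (hinj : Set.InjOn φ s) (hmaps : ∀ x ∈ s, φ x ∈ s') {g : ι → X} {g' : ι' → X}
    (hle : ∀ x ∈ s, ‖g x‖ ≤ ‖g' (φ x)‖) : lpSeminorm hp s g ≤ lpSeminorm hp s' g' := by
  classical
  simp only [lpSeminorm_apply]
  gcongr
  calc ∑ x ∈ s, ‖g x‖ ^ p ≤ ∑ x ∈ s, ‖g' (φ x)‖ ^ p := by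
        gcongr with x hx
        exact hle x hx
    _ = ∑ y ∈ s.image φ, ‖g' y‖ ^ p := by
        rw [Finset.sum_image hinj]
    _ ≤ ∑ y ∈ s', ‖g' y‖ ^ p := by
        gcongr
        exact Finset.image_subset_iff.2 hmaps

lemma lpSeminorm_mono {s s' : Finset ι} (h : s ⊆ s') (g : ι → X) :
    lpSeminorm hp s g ≤ lpSeminorm hp s' g :=
  lpSeminorm_le_of_injOn hp (Set.injOn_id _) h fun _ _ ↦ le_rfl

lemma lpSeminorm_midpoint_rpow_add_le {κ q : ℝ}
    (htwo : ∀ x y : X, ‖(1 / 2 : ℝ) • (x + y)‖ ^ p + κ * (‖x - y‖ ^ q * max ‖x‖ ‖y‖ ^ (p - q)) ≤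
      (‖x‖ ^ p + ‖y‖ ^ p) / 2) (s : Finset ι) (u v : ι → X) :
    lpSeminorm hp s ((1 / 2 : ℝ) • (u + v)) ^ p +
        κ * ∑ i ∈ s, ‖u i - v i‖ ^ q * max ‖u i‖ ‖v i‖ ^ (p - q) ≤
      (lpSeminorm hp s u ^ p + lpSeminorm hp s v ^ p) / 2 := by
  simp only [lpSeminorm_rpow_self, Finset.mul_sum, ← Finset.sum_add_distrib, Finset.sum_div]
  exact Finset.sum_le_sum fun i _ ↦ htwo (u i) (v i)

lemma lpSeminorm_sub_rpow_le {q : ℝ} (hpq : p ≤ q) (s : Finset ι) (u v : ι → X) :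
    lpSeminorm hp s (u - v) ^ q ≤ (lpSeminorm hp s u ^ p + lpSeminorm hp s v ^ p) ^ (q / p - 1) *
      ∑ i ∈ s, ‖u i - v i‖ ^ q * max ‖u i‖ ‖v i‖ ^ (p - q) := by
  have hp0 : 0 < p := by linarith
  have hmax (i : ι) : 0 ≤ max ‖u i‖ ‖v i‖ := le_max_of_le_left (norm_nonneg _)
  have hθ : 0 ≤ q / p - 1 := sub_nonneg.2 ((one_le_div₀ hp0).2 hpq)
  have hsum : ∑ i ∈ s, max ‖u i‖ ‖v i‖ ^ p ≤ lpSeminorm hp s u ^ p + lpSeminorm hp s v ^ p := by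
    rw [lpSeminorm_rpow_self, lpSeminorm_rpow_self, ← Finset.sum_add_distrib]
    gcongr with i
    rcases max_choice ‖u i‖ ‖v i‖ with h | h <;> rw [h]
    exacts [le_add_of_nonneg_right (by positivity), le_add_of_nonneg_left (by positivity)]
  rw [lpSeminorm_rpow]
  refine (sum_rpow_rpow_le_mul_sum s hp0 hpq (fun i ↦ norm_nonneg ((u - v) i)) hmax
    fun i hi ↦ ?_).trans ?_
  · have hu : u i = 0 := norm_le_zero_iff.1 (hi ▸ le_max_left _ _)
    have hv : v i = 0 := norm_le_zero_iff.1 (hi ▸ le_max_right _ _)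
    rw [Pi.sub_apply, hu, hv, sub_zero, norm_zero]
  · simp only [Pi.sub_apply]
    gcongr with i

end lpSeminorm

lemma exists_hasMidpointGap_lpSeminorm {η p q : ℝ} (hη : 0 < η) (hp : 1 < p) (hq : 2 ≤ q)
    (hpq : p ≤ q) :
    ∃ κ > 0, ∀ (X : Type u) [NormedAddCommGroup X] [NormedSpace ℝ X], HasPowerModulus η q X →
      ∀ {ι : Type v} (s : Finset ι),
        HasMidpointGap κ q (lpSeminorm hp.le s : Seminorm ℝ (ι → X)) := by
  obtain ⟨κ, hκ, htwo⟩ := exists_norm_midpoint_rpow_add_mul_max_le hη hp hq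
  have hp0 : 0 < p := by linarith
  set θ := q / p with hθ
  have hθ1 : 1 ≤ θ := (one_le_div₀ hp0).2 hpq
  refine ⟨κ / 2 ^ (θ - 1), by positivity, fun X _ _ hX ι s u v ↦ ?_⟩
  set N : Seminorm ℝ (ι → X) := lpSeminorm hp.le s
  have hpow {a : ℝ} (ha : 0 ≤ a) : a ^ q = (a ^ p) ^ θ := by
    rw [← Real.rpow_mul ha, hθ, mul_div_cancel₀ _ hp0.ne']
  set P := max (N u) (N v) ^ p
  set Q := ∑ i ∈ s, ‖u i - v i‖ ^ q * max ‖u i‖ ‖v i‖ ^ (p - q)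
  have hM : 0 ≤ max (N u) (N v) := le_max_of_le_left (apply_nonneg _ _)
  have hQ : 0 ≤ Q := Finset.sum_nonneg fun i _ ↦
    mul_nonneg (by positivity) (Real.rpow_nonneg (le_max_of_le_left (norm_nonneg _)) _)
  have hu : N u ^ p ≤ P := Real.rpow_le_rpow (apply_nonneg N u) (le_max_left _ _) hp0.le
  have hv : N v ^ p ≤ P := Real.rpow_le_rpow (apply_nonneg N v) (le_max_right _ _) hp0.le
  have hmid : N ((1 / 2 : ℝ) • (u + v)) ^ p ≤ P - κ * Q := by
    linarith [lpSeminorm_midpoint_rpow_add_le hp.le (htwo X hX) s u v]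
  have hdiff : N (u - v) ^ q ≤ (2 * P) ^ (θ - 1) * Q := by
    refine (lpSeminorm_sub_rpow_le hp.le hpq s u v).trans ?_
    gcongr
    linarith
  have hgain : κ / 2 ^ (θ - 1) * N (u - v) ^ q ≤ P ^ (θ - 1) * (κ * Q) :=
    calc _ ≤ κ / 2 ^ (θ - 1) * ((2 * P) ^ (θ - 1) * Q) := by gcongr
      _ = P ^ (θ - 1) * (κ * Q) := by
        rw [Real.mul_rpow zero_le_two (by positivity)]
        field_simp
  calc _ ≤ (P - κ * Q) ^ θ + P ^ (θ - 1) * (κ * Q) := by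
        rw [hpow (apply_nonneg N _)]
        gcongr
    _ ≤ P ^ θ := by
        linarith [rpow_sub_le_rpow_sub_mul (mul_nonneg hκ.le hQ)
          (sub_nonneg.1 ((by positivity : 0 ≤ N _ ^ p).trans hmid)) hθ1]
    _ = max (N u) (N v) ^ q := (hpow hM).symm

end UniformConvexity

section ErgodicAverages

open Finset

variable {A : Type*} [Ring A] [Algebra ℝ A] (T : A) (n : ℕ)

/-- The Cesàro average of `1, T, …, T ^ (n - 1)`; it is `0` for `n = 0`. -/
noncomputable def ergodicAverage : A := (n : ℝ)⁻¹ • ∑ i ∈ range n, T ^ i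

/-- Twice the difference of the averages of lengths `2 * n` and `n`; see
`ergodicAverage_two_mul_sub`. -/
noncomputable def ergodicDiff : A := (T ^ n - 1) * ergodicAverage T n

@[simp]
lemma ergodicAverage_one : ergodicAverage T 1 = 1 := by simp [ergodicAverage]

lemma ergodicAverage_two_mul :
    ergodicAverage T (2 * n) = (1 / 2 : ℝ) • (ergodicAverage T n + T ^ n * ergodicAverage T n) := by
  simp only [ergodicAverage, two_mul, sum_range_add, pow_add, ← mul_sum, mul_smul_comm]
  push_cast
  rw [← two_mul, mul_inv, ← smul_add, smul_smul, one_div]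

lemma ergodicAverage_two_mul_sub :
    ergodicAverage T (2 * n) - ergodicAverage T n = (1 / 2 : ℝ) • ergodicDiff T n := by
  rw [ergodicAverage_two_mul, ergodicDiff, sub_mul, one_mul]
  module

lemma pow_sub_one_mul_ergodicAverage (k : ℕ) :
    (T ^ k - 1) * ergodicAverage T n = ((k : ℝ) / n) • (ergodicAverage T k * (T ^ n - 1)) := by
  rcases eq_or_ne k 0 with rfl | hk
  · simp
  have hk' : (k : ℝ) ≠ 0 := Nat.cast_ne_zero.2 hk
  rw [ergodicAverage, ergodicAverage, mul_smul_comm, smul_mul_assoc, smul_smul, ← geom_sum_mul,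
    ← mul_geom_sum, mul_assoc, div_mul_eq_mul_div, mul_inv_cancel₀ hk', one_div]

lemma ergodicDiff_eq_half_ergodicDiff_two_mul_sub :
    ergodicDiff T n = (1 / 2 : ℝ) • ergodicDiff T (2 * n) -
      ((1 / 4 : ℝ) • T ^ n + (3 / 4 : ℝ) • 1) * ((T ^ n - 1) * ergodicDiff T n) := by
  rw [ergodicDiff, ergodicDiff, ergodicAverage_two_mul, two_mul, pow_add]
  simp only [add_mul, sub_mul, mul_add, mul_sub, smul_mul_assoc, mul_smul_comm, one_mul, mul_assoc]
  module

lemma one_sub_ergodicAverage_two_pow (j : ℕ) :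
    1 - ergodicAverage T (2 ^ j) = -((1 / 2 : ℝ) • ∑ l ∈ range j, ergodicDiff T (2 ^ l)) := by
  have htel := sum_range_sub (fun l ↦ ergodicAverage T (2 ^ l)) j
  simp only [pow_succ', ergodicAverage_two_mul_sub, pow_zero, ergodicAverage_one] at htel
  rw [smul_sum, htel, neg_sub]

lemma pow_sub_one_eq_add (k : ℕ) :
    T ^ k - 1 = (T ^ k - 1) * (1 - ergodicAverage T n) +
      ((k : ℝ) / n) • (ergodicAverage T k * (T ^ n - 1)) := by
  rw [← pow_sub_one_mul_ergodicAverage, ← mul_add, sub_add_cancel, mul_one]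

end ErgodicAverages

section Intertwining

variable {E E' : Type*} [AddCommGroup E] [Module ℝ E] [AddCommGroup E'] [Module ℝ E']
  {T : Module.End ℝ E} {T' : Module.End ℝ E'} {D : E →ₗ[ℝ] E'}

lemma map_pow_apply (h : T' ∘ₗ D = D ∘ₗ T) (n : ℕ) (f : E) : D ((T ^ n) f) = (T' ^ n) (D f) :=
  (DFunLike.congr_fun (Module.End.commute_pow_left_of_commute h n) f).symm

lemma map_ergodicAverage (h : T' ∘ₗ D = D ∘ₗ T) (n : ℕ) (f : E) :
    D (ergodicAverage T n f) = ergodicAverage T' n (D f) := by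
  simp only [ergodicAverage, LinearMap.smul_apply, LinearMap.sum_apply, map_smul, map_sum,
    map_pow_apply h]

lemma map_ergodicDiff (h : T' ∘ₗ D = D ∘ₗ T) (n : ℕ) (f : E) :
    D (ergodicDiff T n f) = ergodicDiff T' n (D f) := by
  simp only [ergodicDiff, Module.End.mul_apply, LinearMap.sub_apply, Module.End.one_apply, map_sub,
    map_pow_apply h, map_ergodicAverage h]

end Intertwining

section TranslationScales

open Finset

variable {E : Type*} [AddCommGroup E] [Module ℝ E] {T : Module.End ℝ E} {N : ℕ → Seminorm ℝ E}

lemma seminorm_sum_le {ι : Type*} (N : Seminorm ℝ E) (s : Finset ι) (g : ι → E) :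
    N (∑ i ∈ s, g i) ≤ ∑ i ∈ s, N (g i) :=
  le_sum_of_subadditive N (map_zero N).le (map_add_le_add N) s g

/-- An increasing family of seminorms along which `T` is a contraction with a loss of one step, as
for the norms over growing domains of functions that `T` translates. -/
structure IsTranslationScale (T : Module.End ℝ E) (N : ℕ → Seminorm ℝ E) : Prop where
  mono : Monotone N
  apply_le : ∀ m g, N m (T g) ≤ N (m + 1) g

namespace IsTranslationScale

variable (h : IsTranslationScale T N) (m : ℕ)
include h

lemma le_of_le {m m' : ℕ} (hm : m ≤ m') (g : E) : N m g ≤ N m' g := h.mono hm g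

lemma pow_apply_le (k : ℕ) (g : E) : N m ((T ^ k) g) ≤ N (m + k) g := by
  induction k generalizing m with
  | zero => simp
  | succ k ih =>
    rw [pow_succ', Module.End.mul_apply, add_comm k, ← add_assoc]
    exact (h.apply_le m _).trans (ih (m + 1))

lemma pow_sub_one_apply_le (k : ℕ) (g : E) : N m ((T ^ k - 1) g) ≤ 2 * N (m + k) g :=
  calc N m ((T ^ k) g - g) ≤ N m ((T ^ k) g) + N m g := map_sub_le_add _ _ _
    _ ≤ N (m + k) g + N (m + k) g :=
      add_le_add (h.pow_apply_le m k g) (h.le_of_le (Nat.le_add_right m k) g)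
    _ = 2 * N (m + k) g := (two_mul _).symm

lemma ergodicAverage_apply_le (n : ℕ) (g : E) : N m (ergodicAverage T n g) ≤ N (m + n) g := by
  have hsum : N m (∑ i ∈ range n, (T ^ i) g) ≤ n * N (m + n) g :=
    calc _ ≤ ∑ i ∈ range n, N m ((T ^ i) g) := seminorm_sum_le _ _ _
      _ ≤ ∑ _i ∈ range n, N (m + n) g := sum_le_sum fun i hi ↦
        (h.pow_apply_le m i g).trans (h.le_of_le (by gcongr; exact (mem_range.1 hi).le) g)
      _ = n * N (m + n) g := by rw [sum_const, card_range, nsmul_eq_mul]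
  calc _ = (n : ℝ)⁻¹ * N m (∑ i ∈ range n, (T ^ i) g) := by
        rw [ergodicAverage, LinearMap.smul_apply, LinearMap.sum_apply, map_smul_eq_mul,
          Real.norm_of_nonneg (by positivity)]
    _ ≤ N (m + n) g := inv_mul_le_of_le_mul₀ n.cast_nonneg (apply_nonneg _ _) hsum

lemma ergodicDiff_gap {κ q : ℝ} (hq : 0 ≤ q) (hgap : HasMidpointGap κ q (N m)) (n : ℕ) (g : E) :
    N m (ergodicAverage T (2 * n) g) ^ q + κ * N m (ergodicDiff T n g) ^ q ≤
      N (m + n) (ergodicAverage T n g) ^ q := by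
  set a := ergodicAverage T n g
  have hdiff : ergodicDiff T n g = (T ^ n) a - a := rfl
  calc _ = N m ((1 / 2 : ℝ) • (a + (T ^ n) a)) ^ q + κ * N m (a - (T ^ n) a) ^ q := by
        rw [ergodicAverage_two_mul, hdiff, map_sub_rev]
        rfl
    _ ≤ max (N m a) (N m ((T ^ n) a)) ^ q := hgap _ _
    _ ≤ N (m + n) a ^ q := by
        gcongr
        exact max_le (h.le_of_le (Nat.le_add_right m n) a) (h.pow_apply_le m n a)

lemma sum_ergodicDiff_le {κ q : ℝ} (hκ : 0 ≤ κ) (hq : 0 ≤ q)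
    (hgap : ∀ m, HasMidpointGap κ q (N m)) (j : ℕ) (g : E) :
    N m (ergodicAverage T (2 ^ j) g) ^ q + κ * ∑ i ∈ range j, N m (ergodicDiff T (2 ^ i) g) ^ q ≤
      N (m + 2 ^ j) g ^ q := by
  induction j generalizing m with
  | zero =>
    simpa using Real.rpow_le_rpow (apply_nonneg _ _) (h.le_of_le m.le_succ g) hq
  | succ j ih =>
    have hstep := h.ergodicDiff_gap m hq (hgap m) (2 ^ j) g
    have hmono : ∑ i ∈ range j, N m (ergodicDiff T (2 ^ i) g) ^ q ≤
        ∑ i ∈ range j, N (m + 2 ^ j) (ergodicDiff T (2 ^ i) g) ^ q := by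
      gcongr
      exact h.le_of_le (Nat.le_add_right _ _) _
    calc _ = N m (ergodicAverage T (2 * 2 ^ j) g) ^ q + κ * N m (ergodicDiff T (2 ^ j) g) ^ q +
          κ * ∑ i ∈ range j, N m (ergodicDiff T (2 ^ i) g) ^ q := by
          rw [sum_range_succ, pow_succ']
          ring
      _ ≤ N (m + 2 ^ j) (ergodicAverage T (2 ^ j) g) ^ q +
          κ * ∑ i ∈ range j, N (m + 2 ^ j) (ergodicDiff T (2 ^ i) g) ^ q := by gcongr
      _ ≤ N (m + 2 ^ j + 2 ^ j) g ^ q := ih (m + 2 ^ j)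
      _ = N (m + 2 ^ (j + 1)) g ^ q := by rw [add_assoc, ← two_mul, ← pow_succ']

omit h in
lemma two_mul_sub_ergodicAverage_le (j : ℕ) (f : E) :
    2 * N m ((1 - ergodicAverage T (2 ^ j)) f) ≤
      ∑ l ∈ range j, N m (ergodicDiff T (2 ^ l) f) := by
  rw [one_sub_ergodicAverage_two_pow, LinearMap.neg_apply, map_neg_eq_map, LinearMap.smul_apply,
    map_smul_eq_mul, Real.norm_of_nonneg one_half_pos.le, ← mul_assoc,
    mul_one_div_cancel two_ne_zero, one_mul, LinearMap.sum_apply]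
  exact seminorm_sum_le _ _ _

lemma pow_two_pow_sub_one_apply_le (j : ℕ) (f : E) :
    N m ((T ^ (2 ^ j : ℕ) - 1) f) ≤
      ∑ l ∈ range (j + 1), N (m + 2 ^ j) (ergodicDiff T (2 ^ l) f) := by
  set P := ergodicAverage T (2 ^ j)
  calc N m ((T ^ (2 ^ j : ℕ) - 1) f)
      = N m ((T ^ (2 ^ j : ℕ) - 1) ((1 - P) f) + ergodicDiff T (2 ^ j) f) := by
        congr 1
        simp only [ergodicDiff, P, Module.End.mul_apply, LinearMap.sub_apply, Module.End.one_apply,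
          map_sub]
        abel
    _ ≤ 2 * N (m + 2 ^ j) ((1 - P) f) + N (m + 2 ^ j) (ergodicDiff T (2 ^ j) f) :=
        (map_add_le_add _ _ _).trans (add_le_add (h.pow_sub_one_apply_le m _ _)
          (h.le_of_le (Nat.le_add_right _ _) _))
    _ ≤ _ := by
        rw [sum_range_succ]
        gcongr
        exact two_mul_sub_ergodicAverage_le _ j f

lemma pow_sub_one_apply_le_sum {j k : ℕ} (hk : k < 2 ^ (j + 1)) (f : E) :
    N m ((T ^ k - 1) f) ≤
      3 * ∑ l ∈ range (j + 1), N (m + k + 2 ^ j) (ergodicDiff T (2 ^ l) f) := by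
  set S := ∑ l ∈ range (j + 1), N (m + k + 2 ^ j) (ergodicDiff T (2 ^ l) f)
  have hratio : (k : ℝ) / (2 ^ j : ℕ) ≤ 2 := by
    rw [div_le_iff₀ (by positivity)]
    exact_mod_cast (pow_succ' 2 j ▸ hk).le
  have hnear : N m ((T ^ k - 1) ((1 - ergodicAverage T (2 ^ j)) f)) ≤ S :=
    calc _ ≤ 2 * N (m + k) ((1 - ergodicAverage T (2 ^ j)) f) := h.pow_sub_one_apply_le m k _
      _ ≤ ∑ l ∈ range j, N (m + k) (ergodicDiff T (2 ^ l) f) :=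
        two_mul_sub_ergodicAverage_le _ j f
      _ ≤ ∑ l ∈ range (j + 1), N (m + k) (ergodicDiff T (2 ^ l) f) :=
        sum_le_sum_of_subset_of_nonneg (range_subset_range.2 j.le_succ)
          fun _ _ _ ↦ apply_nonneg _ _
      _ ≤ S := sum_le_sum fun l _ ↦ h.le_of_le (Nat.le_add_right _ _) _
  have hfar : N m (ergodicAverage T k ((T ^ (2 ^ j : ℕ) - 1) f)) ≤ S :=
    (h.ergodicAverage_apply_le m k _).trans (h.pow_two_pow_sub_one_apply_le (m + k) j f)
  calc N m ((T ^ k - 1) f)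
      = N m ((T ^ k - 1) ((1 - ergodicAverage T (2 ^ j)) f) +
          ((k : ℝ) / (2 ^ j : ℕ)) • ergodicAverage T k ((T ^ (2 ^ j : ℕ) - 1) f)) := by
        conv_lhs => rw [pow_sub_one_eq_add T (2 ^ j) k]
        rfl
    _ ≤ N m ((T ^ k - 1) ((1 - ergodicAverage T (2 ^ j)) f)) +
          (k : ℝ) / (2 ^ j : ℕ) * N m (ergodicAverage T k ((T ^ (2 ^ j : ℕ) - 1) f)) := by
        refine (map_add_le_add _ _ _).trans_eq ?_
        rw [map_smul_eq_mul, Real.norm_of_nonneg (by positivity)]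
    _ ≤ S + 2 * S := by gcongr
    _ = 3 * S := by ring

lemma ergodicDiff_apply_le (n : ℕ) (f : E) :
    N m (ergodicDiff T n f) ≤
      1 / 2 * N m (ergodicDiff T (2 * n) f) + N (m + n) ((T ^ n - 1) (ergodicDiff T n f)) := by
  set g := (T ^ n - 1) (ergodicDiff T n f)
  have hle : N m ((1 / 4 : ℝ) • (T ^ n) g + (3 / 4 : ℝ) • g) ≤ N (m + n) g :=
    calc _ ≤ 1 / 4 * N m ((T ^ n) g) + 3 / 4 * N m g := by
          refine (map_add_le_add _ _ _).trans_eq ?_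
          rw [map_smul_eq_mul, map_smul_eq_mul, Real.norm_of_nonneg (by norm_num),
            Real.norm_of_nonneg (by norm_num)]
      _ ≤ 1 / 4 * N (m + n) g + 3 / 4 * N (m + n) g := by
          gcongr
          exacts [h.pow_apply_le m n g, h.le_of_le (Nat.le_add_right m n) g]
      _ = N (m + n) g := by ring
  calc N m (ergodicDiff T n f)
      = N m ((1 / 2 : ℝ) • ergodicDiff T (2 * n) f -
          ((1 / 4 : ℝ) • (T ^ n) g + (3 / 4 : ℝ) • g)) :=
        congrArg (fun S : Module.End ℝ E ↦ N m (S f))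
          (ergodicDiff_eq_half_ergodicDiff_two_mul_sub T n)
    _ ≤ N m ((1 / 2 : ℝ) • ergodicDiff T (2 * n) f) + N (m + n) g :=
        (map_sub_le_add _ _ _).trans (by gcongr)
    _ = _ := by rw [map_smul_eq_mul, Real.norm_of_nonneg one_half_pos.le]

end IsTranslationScale

end TranslationScales

section VerticalHorizontal

open Finset

lemma inv_sqrt_two_pow (j : ℕ) : (√2)⁻¹ ^ j = (√(2 ^ j))⁻¹ := by
  rw [inv_pow, Real.sqrt_eq_rpow, Real.sqrt_eq_rpow, Real.rpow_pow_comm zero_le_two]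

lemma inv_sqrt_two_lt_one : (√2)⁻¹ < 1 := inv_lt_one_of_one_lt₀ Real.one_lt_sqrt_two

lemma two_pow_rpow_neg_half_mul_rpow (q : ℝ) (j : ℕ) {x : ℝ} (hx : 0 ≤ x) :
    ((2 : ℝ) ^ j) ^ (-(q / 2)) * x ^ q = ((√2)⁻¹ ^ j * x) ^ q := by
  rw [Real.mul_rpow (by positivity) hx, inv_sqrt_two_pow, Real.sqrt_eq_rpow,
    Real.inv_rpow (by positivity), ← Real.rpow_mul (by positivity), ← Real.rpow_neg (by positivity),
    one_div_mul_eq_div]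

variable {E E' : Type*} [AddCommGroup E] [Module ℝ E] [AddCommGroup E'] [Module ℝ E']
  {T : Module.End ℝ E} {N : ℕ → Seminorm ℝ E} {T' : Module.End ℝ E'} {N' : ℕ → Seminorm ℝ E'}
  {D : E →ₗ[ℝ] E'} {C κ q : ℝ} {R : ℕ}

namespace IsTranslationScale

lemma sum_rpow_mul_pow_sub_one_le (h : IsTranslationScale T N) (hq : 1 ≤ q) (m : ℕ) (f : E) :
    ∑ k ∈ Icc 1 R, (k : ℝ) ^ (-1 - q / 2) * N m ((T ^ k - 1) f) ^ q ≤
      3 ^ q * ((1 - (√2)⁻¹) ^ (-q) * ∑ j ∈ range (Nat.log 2 R + 1),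
        ((√2)⁻¹ ^ j * N (m + 2 * R) (ergodicDiff T (2 ^ j) f)) ^ q) := by
  set e : ℕ → ℝ := fun l ↦ N (m + 2 * R) (ergodicDiff T (2 ^ l) f)
  have he (j : ℕ) : 0 ≤ ∑ l ∈ range (j + 1), e l := sum_nonneg fun _ _ ↦ apply_nonneg _ _
  have hscale (k : ℕ) (hk : k ∈ Icc 1 R) :
      N m ((T ^ k - 1) f) ^ q ≤ (3 * ∑ l ∈ range (Nat.log 2 k + 1), e l) ^ q := by
    obtain ⟨hk1, hkR⟩ := mem_Icc.1 hk
    have hlog : 2 ^ Nat.log 2 k ≤ k := Nat.pow_log_le_self 2 (Nat.one_le_iff_ne_zero.1 hk1)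
    gcongr
    refine (h.pow_sub_one_apply_le_sum m (Nat.lt_pow_succ_log_self one_lt_two k) f).trans ?_
    gcongr with l
    exact h.le_of_le (by lia) _
  calc _ ≤ ∑ j ∈ range (Nat.log 2 R + 1), ((2 : ℝ) ^ j) ^ (-(q / 2)) *
        (3 * ∑ l ∈ range (j + 1), e l) ^ q :=
        sum_rpow_mul_le_sum_dyadic (by linarith) (fun j ↦ by have := he j; positivity) hscale
    _ = 3 ^ q * ∑ j ∈ range (Nat.log 2 R + 1), ((√2)⁻¹ ^ j * ∑ l ∈ range (j + 1), e l) ^ q := by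
        rw [mul_sum]
        refine sum_congr rfl fun j _ ↦ ?_
        rw [two_pow_rpow_neg_half_mul_rpow q j (by have := he j; positivity), mul_left_comm,
          Real.mul_rpow zero_le_three (by have := he j; positivity)]
    _ ≤ _ := by
        gcongr
        exact sum_rpow_mul_sum_le (by positivity) inv_sqrt_two_lt_one hq
          (fun _ ↦ apply_nonneg _ _) _

lemma sum_ergodicDiff_add_ergodicAverage_le (h : IsTranslationScale T N) (hκ : 0 < κ)
    (hgap : ∀ m, HasMidpointGap κ q (N m)) (hq : 0 ≤ q) (m j : ℕ) (g : E) :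
    ∑ i ∈ range j, N m (ergodicDiff T (2 ^ i) g) ^ q + N m (ergodicAverage T (2 ^ j) g) ^ q ≤
      (1 + κ⁻¹) * N (m + 2 ^ j) g ^ q := by
  have hsum := h.sum_ergodicDiff_le m hκ.le hq hgap j g
  set A := N m (ergodicAverage T (2 ^ j) g) ^ q
  set S := ∑ i ∈ range j, N m (ergodicDiff T (2 ^ i) g) ^ q
  calc S + A ≤ κ⁻¹ * (A + κ * S) + (A + κ * S) := by
        refine add_le_add ?_ (le_add_of_nonneg_right (by positivity))
        rw [mul_add, inv_mul_cancel_left₀ hκ.ne']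
        exact le_add_of_nonneg_left (by positivity)
    _ = (1 + κ⁻¹) * (A + κ * S) := by ring
    _ ≤ _ := by gcongr

lemma inv_sqrt_two_pow_mul_pow_sub_one_le
    (hcost : ∀ k ≤ R, ∀ m g, N m ((T ^ k - 1) g) ≤ C * √k * N' m (D g)) {j : ℕ} (hj : 2 ^ j ≤ R)
    (m : ℕ) (g : E) : (√2)⁻¹ ^ j * N m ((T ^ (2 ^ j : ℕ) - 1) g) ≤ C * N' m (D g) := by
  rw [inv_sqrt_two_pow, inv_mul_le_iff₀ (by positivity)]
  refine (hcost _ hj m g).trans_eq ?_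
  push_cast
  ring

lemma inv_sqrt_two_pow_mul_ergodicDiff_le (h : IsTranslationScale T N) (hTD : T' ∘ₗ D = D ∘ₗ T)
    (hcost : ∀ k ≤ R, ∀ m g, N m ((T ^ k - 1) g) ≤ C * √k * N' m (D g)) {j : ℕ} (hj : 2 ^ j ≤ R)
    (m : ℕ) (f : E) :
    (√2)⁻¹ ^ j * N m (ergodicDiff T (2 ^ j) f) ≤
      (√2)⁻¹ * ((√2)⁻¹ ^ (j + 1) * N m (ergodicDiff T (2 ^ (j + 1)) f)) +
        C * N' (m + 2 ^ j) (ergodicDiff T' (2 ^ j) (D f)) := by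
  have hself := h.ergodicDiff_apply_le m (2 ^ j) f
  have hhalf : (√2)⁻¹ * (√2)⁻¹ = 1 / 2 := by
    rw [← mul_inv, Real.mul_self_sqrt zero_le_two, one_div]
  calc _ ≤ (√2)⁻¹ ^ j * (1 / 2 * N m (ergodicDiff T (2 * 2 ^ j) f) +
        N (m + 2 ^ j) ((T ^ (2 ^ j : ℕ) - 1) (ergodicDiff T (2 ^ j) f))) := by gcongr
    _ = (√2)⁻¹ * ((√2)⁻¹ ^ (j + 1) * N m (ergodicDiff T (2 ^ (j + 1)) f)) + (√2)⁻¹ ^ j *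
        N (m + 2 ^ j) ((T ^ (2 ^ j : ℕ) - 1) (ergodicDiff T (2 ^ j) f)) := by
        rw [← hhalf, pow_succ' 2 j]
        ring
    _ ≤ _ := by
        rw [← map_ergodicDiff hTD]
        exact add_le_add_right (inv_sqrt_two_pow_mul_pow_sub_one_le hcost hj _ _) _

lemma sum_rpow_ergodicDiff_le (h : IsTranslationScale T N) (h' : IsTranslationScale T' N')
    (hTD : T' ∘ₗ D = D ∘ₗ T) (hκ : 0 < κ) (hgap : ∀ m, HasMidpointGap κ q (N' m)) (hq : 1 ≤ q)
    (hC : 0 ≤ C) (hcost : ∀ k ≤ R, ∀ m g, N m ((T ^ k - 1) g) ≤ C * √k * N' m (D g)) {J : ℕ}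
    (hJ : 2 ^ J ≤ R) (m : ℕ) (f : E) :
    ∑ j ∈ range (J + 1), ((√2)⁻¹ ^ j * N m (ergodicDiff T (2 ^ j) f)) ^ q ≤
      (1 - (√2)⁻¹) ^ (-q) * (C ^ q * ((1 + κ⁻¹) * N' (m + 2 ^ J + 2 ^ J) (D f) ^ q)) := by
  set d : ℕ → ℝ := fun j ↦ N' (m + 2 ^ J) (ergodicDiff T' (2 ^ j) (D f))
  set a := N' (m + 2 ^ J) (ergodicAverage T' (2 ^ J) (D f))
  have hlast : (√2)⁻¹ ^ J * N m (ergodicDiff T (2 ^ J) f) ≤ C * a := by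
    refine (inv_sqrt_two_pow_mul_pow_sub_one_le hcost hJ m _).trans ?_
    rw [map_ergodicAverage hTD]
    gcongr
    exact h'.le_of_le (Nat.le_add_right _ _) _
  have hpred (j : ℕ) (hj : j < J) : (√2)⁻¹ ^ j * N m (ergodicDiff T (2 ^ j) f) ≤
      (√2)⁻¹ * ((√2)⁻¹ ^ (j + 1) * N m (ergodicDiff T (2 ^ (j + 1)) f)) + C * d j := by
    have hjJ : 2 ^ j ≤ 2 ^ J := Nat.pow_le_pow_right two_pos hj.le
    refine (h.inv_sqrt_two_pow_mul_ergodicDiff_le hTD hcost (hjJ.trans hJ) m f).trans ?_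
    exact add_le_add_right (mul_le_mul_of_nonneg_left (h'.le_of_le (by lia) _) hC) _
  have hsplit : ∑ j ∈ range (J + 1), (C * if j < J then d j else a) ^ q =
      C ^ q * (∑ j ∈ range J, d j ^ q + a ^ q) := by
    rw [sum_range_succ, if_neg (lt_irrefl J), mul_add, mul_sum,
      Real.mul_rpow hC (apply_nonneg _ _)]
    refine congrArg (· + _) (sum_congr rfl fun j hj ↦ ?_)
    rw [if_pos (mem_range.1 hj), Real.mul_rpow hC (apply_nonneg _ _)]
  have hy (j : ℕ) : 0 ≤ C * if j < J then d j else a :=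
    mul_nonneg hC (by split_ifs <;> exact apply_nonneg _ _)
  refine (sum_rpow_le_of_le_mul_succ_add (y := fun j ↦ C * if j < J then d j else a)
    (by positivity) inv_sqrt_two_lt_one hq (fun _ ↦ by positivity) hy (by simpa using hlast)
    (fun j hj ↦ by simpa only [if_pos hj] using hpred j hj)).trans ?_
  rw [hsplit]
  have hpos : 0 ≤ 1 - (√2)⁻¹ := sub_nonneg.2 inv_sqrt_two_lt_one.le
  gcongr
  exact h'.sum_ergodicDiff_add_ergodicAverage_le hκ hgap (by linarith) _ J (D f)

/-- The abstract form of the inequality: `T` is translation by a central element, `D` the horizontal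
gradient, and `hcost` says that the `k`-th power of that element has word length `O(√k)`. -/
theorem sum_rpow_mul_pow_sub_one_le_map (h : IsTranslationScale T N)
    (h' : IsTranslationScale T' N') (hTD : T' ∘ₗ D = D ∘ₗ T) (hκ : 0 < κ)
    (hgap : ∀ m, HasMidpointGap κ q (N' m)) (hq : 1 ≤ q) (hC : 0 ≤ C)
    (hcost : ∀ k ≤ R, ∀ m g, N m ((T ^ k - 1) g) ≤ C * √k * N' m (D g)) (f : E) :
    ∑ k ∈ Icc 1 R, (k : ℝ) ^ (-1 - q / 2) * N 0 ((T ^ k - 1) f) ^ q ≤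
      3 ^ q * (1 - (√2)⁻¹) ^ (-q) * (1 - (√2)⁻¹) ^ (-q) * C ^ q * (1 + κ⁻¹) *
        N' (4 * R) (D f) ^ q := by
  rcases eq_or_ne R 0 with rfl | hR
  · have : 0 < 1 - (√2)⁻¹ := sub_pos.2 inv_sqrt_two_lt_one
    simp only [zero_lt_one, Icc_eq_empty_of_lt, sum_empty]
    positivity
  have hlog : 2 ^ Nat.log 2 R ≤ R := Nat.pow_log_le_self 2 hR
  have hpos : 0 ≤ 1 - (√2)⁻¹ := sub_nonneg.2 inv_sqrt_two_lt_one.le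
  refine (h.sum_rpow_mul_pow_sub_one_le hq 0 f).trans ?_
  simp only [mul_assoc]
  gcongr
  refine (sum_rpow_ergodicDiff_le h h' hTD hκ hgap hq hC hcost hlog _ f).trans ?_
  gcongr
  exact h'.le_of_le (by lia) _

end IsTranslationScale

end VerticalHorizontal

section WordBalls

open Finset Pointwise

variable {G ι : Type*} [Group G] {gen : ι → G}

/-- The elements of `G` that are products of at most `n` of the `gen i` and their inverses. -/
def wordBall (gen : ι → G) (n : ℕ) : Set G := insert 1 (Set.range gen ∪ (Set.range gen)⁻¹) ^ n

lemma wordBall_mono : Monotone (wordBall gen) := fun _ _ h ↦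
  Set.pow_subset_pow_right (Set.mem_insert 1 _) h

lemma one_mem_wordBall (n : ℕ) : 1 ∈ wordBall gen n := Set.one_mem_pow (Set.mem_insert 1 _)

lemma mul_mem_wordBall {g h : G} {m n : ℕ} (hg : g ∈ wordBall gen m) (hh : h ∈ wordBall gen n) :
    g * h ∈ wordBall gen (m + n) := by
  rw [wordBall, pow_add]
  exact Set.mul_mem_mul hg hh

lemma inv_mem_wordBall {g : G} {n : ℕ} : g⁻¹ ∈ wordBall gen n ↔ g ∈ wordBall gen n := by
  rw [← Set.mem_inv, wordBall, ← inv_pow, Set.inv_insert, Set.union_inv, inv_inv, inv_one,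
    Set.union_comm]

lemma gen_mem_wordBall (i : ι) : gen i ∈ wordBall gen 1 := by
  simp [wordBall]

lemma pow_mem_wordBall {g : G} (hg : g ∈ wordBall gen 1) (n : ℕ) : g ^ n ∈ wordBall gen n := by
  rw [wordBall, pow_one] at hg
  exact Set.pow_mem_pow hg

lemma mem_wordBall_zero {g : G} : g ∈ wordBall gen 0 ↔ g = 1 := by
  rw [wordBall, pow_zero, Set.mem_one]

lemma mem_wordBall_one {g : G} :
    g ∈ wordBall gen 1 ↔ g = 1 ∨ (∃ i, gen i = g) ∨ ∃ i, gen i = g⁻¹ := by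
  rw [wordBall, pow_one]
  rfl

lemma mem_wordBall_succ {g : G} {n : ℕ} :
    g ∈ wordBall gen (n + 1) ↔ ∃ u ∈ wordBall gen n, ∃ s ∈ wordBall gen 1, u * s = g := by
  rw [wordBall, wordBall, wordBall, pow_succ, pow_one, Set.mem_mul]

lemma finite_wordBall [Finite ι] (n : ℕ) : (wordBall gen n).Finite := by
  induction n with
  | zero => exact Set.finite_singleton 1
  | succ n ih =>
    rw [wordBall, pow_succ]
    exact ih.mul (((Set.finite_range gen).union (Set.finite_range gen).inv).insert 1)

lemma mem_wordBall_iff_exists_list {g : G} {n : ℕ} :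
    g ∈ wordBall gen n ↔ ∃ l : List G, l.length ≤ n ∧
      (∀ s ∈ l, s ∈ Set.range gen ∪ (Set.range gen)⁻¹) ∧ l.prod = g := by
  constructor
  · induction n generalizing g with
    | zero => exact fun hg ↦ ⟨[], le_rfl, by simp, (mem_wordBall_zero.1 hg).symm⟩
    | succ n ih =>
      rw [mem_wordBall_succ]
      rintro ⟨u, hu, s, hs, rfl⟩
      obtain ⟨l, hlen, hl, rfl⟩ := ih hu
      rcases mem_wordBall_one.1 hs with rfl | hs
      · exact ⟨l, by lia, hl, by simp⟩
      · exact ⟨l ++ [s], by simpa using hlen,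
          List.forall_mem_append.2 ⟨hl, by simpa using hs⟩, by simp⟩
  · rintro ⟨l, hlen, hl, rfl⟩
    refine wordBall_mono hlen ?_
    clear hlen
    induction l with
    | nil => exact one_mem_wordBall 0
    | cons s l ih =>
      rw [List.forall_mem_cons] at hl
      rw [List.prod_cons, List.length_cons, add_comm]
      exact mul_mem_wordBall (mem_wordBall_one.2 (Or.inr hl.1)) (ih hl.2)

/-- The products `y * c ^ i` with `y` of word length at most `r` and `i ≤ m`. -/
noncomputable def centralZone [Finite ι] (gen : ι → G) (c : G) (r m : ℕ) : Finset G :=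
  ((finite_wordBall (gen := gen) r).mul ((Set.finite_Iic m).image (c ^ ·))).toFinset

variable [Finite ι] {c : G} {r m : ℕ}

lemma mem_centralZone {g : G} :
    g ∈ centralZone gen c r m ↔ ∃ y ∈ wordBall gen r, ∃ i ≤ m, y * c ^ i = g := by
  simp [centralZone, Set.mem_mul]

lemma centralZone_mono_left {r' : ℕ} (h : r ≤ r') :
    centralZone gen c r m ⊆ centralZone gen c r' m := by
  intro g hg
  obtain ⟨y, hy, i, hi, rfl⟩ := mem_centralZone.1 hg
  exact mem_centralZone.2 ⟨y, wordBall_mono h hy, i, hi, rfl⟩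

lemma centralZone_mono_right : Monotone (centralZone gen c r) := by
  intro m m' h g hg
  obtain ⟨y, hy, i, hi, rfl⟩ := mem_centralZone.1 hg
  exact mem_centralZone.2 ⟨y, hy, i, hi.trans h, rfl⟩

lemma coe_centralZone_zero : (centralZone gen c r 0 : Set G) = wordBall gen r := by
  ext g
  simp [mem_centralZone]

lemma mul_center_mem_centralZone {g : G} (hg : g ∈ centralZone gen c r m) :
    g * c ∈ centralZone gen c r (m + 1) := by
  obtain ⟨y, hy, i, hi, rfl⟩ := mem_centralZone.1 hg
  exact mem_centralZone.2 ⟨y, hy, i + 1, by lia, by rw [pow_succ, mul_assoc]⟩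

lemma mul_mem_centralZone (hc : c ∈ Subgroup.center G) {g h : G} {L : ℕ}
    (hg : g ∈ centralZone gen c r m) (hh : h ∈ wordBall gen L) :
    g * h ∈ centralZone gen c (r + L) m := by
  obtain ⟨y, hy, i, hi, rfl⟩ := mem_centralZone.1 hg
  refine mem_centralZone.2 ⟨y * h, mul_mem_wordBall hy hh, i, hi, ?_⟩
  rw [mul_assoc, mul_assoc, Subgroup.mem_center_iff.1 (pow_mem hc i) h]

end WordBalls

section Gradient

open Finset

variable {X : Type*} [NormedAddCommGroup X] [NormedSpace ℝ X] {p : ℝ} (hp : 1 ≤ p)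

lemma isTranslationScale_lpSeminorm {ι : Type*} {φ : ι → ι} (hφ : φ.Injective) {s : ℕ → Finset ι}
    (hs : Monotone s) (hmaps : ∀ m, ∀ x ∈ s m, φ x ∈ s (m + 1)) :
    IsTranslationScale (LinearMap.funLeft ℝ X φ) fun m ↦ lpSeminorm hp (s m) where
  mono _ _ h g := lpSeminorm_mono hp (hs h) g
  apply_le m _ := lpSeminorm_le_of_injOn hp hφ.injOn (hmaps m) fun _ _ ↦ le_rfl

variable {G ι : Type*} [Group G]

variable (X) in
/-- The right translations `f ↦ f (· * h)` of functions on a group. -/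
def rightTranslation : G →* Module.End ℝ (G → X) where
  toFun h := LinearMap.funLeft ℝ X (· * h)
  map_one' := by
    ext f x
    simp [LinearMap.funLeft_apply]
  map_mul' h h' := by
    ext f x
    simp [LinearMap.funLeft_apply, mul_assoc]

lemma rightTranslation_apply (h x : G) (f : G → X) : rightTranslation X h f x = f (x * h) := rfl

variable (X) in
/-- The right gradient of `f` along the `gen i`, whose components are `f (x * gen i) - f x`. -/
def wordGradient (gen : ι → G) : (G → X) →ₗ[ℝ] (G × ι → X) :=
  LinearMap.funLeft ℝ X (fun y ↦ y.1 * gen y.2) - LinearMap.funLeft ℝ X Prod.fst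

variable {gen : ι → G}

lemma wordGradient_apply (f : G → X) (x : G) (i : ι) :
    wordGradient X gen f (x, i) = f (x * gen i) - f x := rfl

variable [Fintype ι] {c : G}

lemma lpSeminorm_rightTranslation_gen_sub_le (hc : c ∈ Subgroup.center G) {s : G}
    (hs : s ∈ wordBall gen 1) (r m : ℕ) (f : G → X) :
    lpSeminorm hp (centralZone gen c r m) (rightTranslation X s f - f) ≤
      lpSeminorm hp (centralZone gen c (r + 1) m ×ˢ univ) (wordGradient X gen f) := by
  have hmaps : ∀ x ∈ centralZone gen c r m, x ∈ centralZone gen c (r + 1) m :=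
    fun x hx ↦ centralZone_mono_left r.le_succ hx
  rcases mem_wordBall_one.1 hs with rfl | ⟨i, rfl⟩ | ⟨i, hi⟩
  · rw [map_one, Module.End.one_apply, sub_self, map_zero]
    exact apply_nonneg _ _
  · exact lpSeminorm_le_of_injOn hp (φ := fun x ↦ (x, i)) (Prod.mk_left_injective i).injOn
      (fun x hx ↦ mem_product.2 ⟨hmaps x hx, mem_univ i⟩) fun _ _ ↦ le_rfl
  · refine lpSeminorm_le_of_injOn hp (φ := fun x ↦ (x * s, i))
      ((Prod.mk_left_injective i).comp (mul_left_injective s)).injOn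
      (fun x hx ↦ mem_product.2 ⟨mul_mem_centralZone hc hx hs, mem_univ i⟩) fun x _ ↦ ?_
    rw [wordGradient_apply, hi, mul_inv_cancel_right, Pi.sub_apply, rightTranslation_apply,
      norm_sub_rev]

lemma lpSeminorm_rightTranslation_sub_le (hc : c ∈ Subgroup.center G) {L : ℕ} {h : G}
    (hh : h ∈ wordBall gen L) (r m : ℕ) (f : G → X) :
    lpSeminorm hp (centralZone gen c r m) (rightTranslation X h f - f) ≤
      L * lpSeminorm hp (centralZone gen c (r + L) m ×ˢ univ) (wordGradient X gen f) := by
  induction L generalizing h with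
  | zero =>
    obtain rfl := mem_wordBall_zero.1 hh
    rw [map_one, Module.End.one_apply, sub_self, map_zero, Nat.cast_zero, zero_mul]
  | succ L ih =>
    obtain ⟨u, hu, s, hs, rfl⟩ := mem_wordBall_succ.1 hh
    calc _ = lpSeminorm hp (centralZone gen c r m) (rightTranslation X u
          (rightTranslation X s f - f) + (rightTranslation X u f - f)) := by
          rw [map_mul, Module.End.mul_apply, (rightTranslation X u).map_sub, sub_add_sub_cancel]
      _ ≤ lpSeminorm hp (centralZone gen c (r + L) m) (rightTranslation X s f - f) +
          L * lpSeminorm hp (centralZone gen c (r + L) m ×ˢ univ) (wordGradient X gen f) :=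
          (map_add_le_add _ _ _).trans (add_le_add (lpSeminorm_le_of_injOn hp
            (mul_left_injective u).injOn (fun x hx ↦ mul_mem_centralZone hc hx hu)
            fun _ _ ↦ le_rfl) (ih hu))
      _ ≤ lpSeminorm hp (centralZone gen c (r + L + 1) m ×ˢ univ) (wordGradient X gen f) +
          L * lpSeminorm hp (centralZone gen c (r + L + 1) m ×ˢ univ) (wordGradient X gen f) := by
          gcongr ?_ + _ * ?_
          · exact lpSeminorm_rightTranslation_gen_sub_le hp hc hs _ m f
          · exact lpSeminorm_mono hp
              (product_subset_product_left (centralZone_mono_left (Nat.le_succ _))) _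
      _ = _ := by
          push_cast
          rw [← add_assoc]
          ring

theorem sum_rpow_mul_rightTranslation_pow_sub_le {κ C q : ℝ} {M R : ℕ}
    (hc : c ∈ Subgroup.center G) (hκ : 0 < κ)
    (hgap : ∀ s : Finset (G × ι), HasMidpointGap κ q (lpSeminorm hp s : Seminorm ℝ (G × ι → X)))
    (hq : 1 ≤ q) (hC : 0 ≤ C)
    (hlen : ∀ k ≤ R, ∃ L ≤ M, (L : ℝ) ≤ C * √k ∧ c ^ k ∈ wordBall gen L) (r : ℕ) (f : G → X) :
    ∑ k ∈ Icc 1 R, (k : ℝ) ^ (-1 - q / 2) *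
        lpSeminorm hp (centralZone gen c r 0) (rightTranslation X (c ^ k) f - f) ^ q ≤
      3 ^ q * (1 - (√2)⁻¹) ^ (-q) * (1 - (√2)⁻¹) ^ (-q) * C ^ q * (1 + κ⁻¹) *
        lpSeminorm hp (centralZone gen c (r + M) (4 * R) ×ˢ univ) (wordGradient X gen f) ^ q := by
  have hT : IsTranslationScale (rightTranslation X c)
      fun m ↦ lpSeminorm hp (centralZone gen c r m) :=
    isTranslationScale_lpSeminorm hp (mul_left_injective c) centralZone_mono_right
      fun m _ ↦ mul_center_mem_centralZone
  have hT' : IsTranslationScale (LinearMap.funLeft ℝ X fun y : G × ι ↦ (y.1 * c, y.2))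
      fun m ↦ lpSeminorm hp (centralZone gen c (r + M) m ×ˢ univ) :=
    isTranslationScale_lpSeminorm hp ((mul_left_injective c).prodMap Function.injective_id)
      (fun _ _ h ↦ product_subset_product_left (centralZone_mono_right h))
      fun m y hy ↦ mem_product.2 ⟨mul_center_mem_centralZone (mem_product.1 hy).1, mem_univ _⟩
  have hcomm : LinearMap.funLeft ℝ X (fun y : G × ι ↦ (y.1 * c, y.2)) ∘ₗ wordGradient X gen =
      wordGradient X gen ∘ₗ rightTranslation X c := by
    ext f ⟨x, i⟩
    simp only [LinearMap.comp_apply, LinearMap.funLeft_apply, wordGradient_apply,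
      rightTranslation_apply, mul_assoc, Subgroup.mem_center_iff.1 hc]
  have hcost (k : ℕ) (hk : k ≤ R) (m : ℕ) (g : G → X) :
      lpSeminorm hp (centralZone gen c r m) ((rightTranslation X c ^ k - 1) g) ≤ C * √k *
        lpSeminorm hp (centralZone gen c (r + M) m ×ˢ univ) (wordGradient X gen g) := by
    obtain ⟨L, hLM, hLC, hL⟩ := hlen k hk
    rw [← map_pow]
    refine (lpSeminorm_rightTranslation_sub_le hp hc hL r m g).trans ?_
    gcongr
    exact lpSeminorm_mono hp
      (product_subset_product_left (centralZone_mono_left (by gcongr))) _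
  have hmain := hT.sum_rpow_mul_pow_sub_one_le_map hT' hcomm hκ (fun m ↦ hgap _) hq hC hcost f
  simpa only [← map_pow, LinearMap.sub_apply, Module.End.one_apply] using hmain

end Gradient

namespace DH

open Finset

lemma gC_eq : gC = ⟨0, 0, 1⟩ := by simp [gC, gA, gB, mul_def, inv_def]

lemma zpow_eq_of_mul_eq_zero {g : DH} (h : g.x * g.y = 0) (n : ℤ) :
    g ^ n = ⟨n * g.x, n * g.y, n * g.z⟩ := by
  induction n using Int.induction_on with
  | zero => simp [one_def]
  | succ n ih =>
    rw [zpow_add_one, ih, mul_def, mk.injEq]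
    exact ⟨by ring, by ring, by linear_combination (n : ℤ) * h⟩
  | pred n ih =>
    rw [zpow_sub_one, ih, mul_def, inv_def, mk.injEq]
    exact ⟨by ring, by ring, by linear_combination (n + 1 : ℤ) * h⟩

lemma gA_zpow (n : ℤ) : gA ^ n = ⟨n, 0, 0⟩ := by simp [zpow_eq_of_mul_eq_zero, gA]

lemma gB_zpow (n : ℤ) : gB ^ n = ⟨0, n, 0⟩ := by simp [zpow_eq_of_mul_eq_zero, gB]

lemma gC_zpow (n : ℤ) : gC ^ n = ⟨0, 0, n⟩ := by simp [zpow_eq_of_mul_eq_zero, gC_eq]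

lemma gC_mem_center : gC ∈ Subgroup.center DH := by
  refine Subgroup.mem_center_iff.2 fun g ↦ ?_
  simp [gC_eq, mul_def, add_comm]

lemma closure_range_gens : Subgroup.closure (Set.range ![gA, gB]) = ⊤ := by
  refine Subgroup.eq_top_iff' _ |>.2 fun g ↦ ?_
  have hA : gA ∈ Subgroup.closure (Set.range ![gA, gB]) := Subgroup.subset_closure ⟨0, rfl⟩
  have hB : gB ∈ Subgroup.closure (Set.range ![gA, gB]) := Subgroup.subset_closure ⟨1, rfl⟩
  have hC : gC ∈ Subgroup.closure (Set.range ![gA, gB]) :=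
    mul_mem (mul_mem (mul_mem hA hB) (inv_mem hA)) (inv_mem hB)
  have hg : g = gB ^ g.y * gA ^ g.x * gC ^ g.z := by
    simp [gA_zpow, gB_zpow, gC_zpow, mul_def]
  rw [hg]
  exact mul_mem (mul_mem (zpow_mem hB _) (zpow_mem hA _)) (zpow_mem hC _)

lemma range_gens_union_inv :
    Set.range ![gA, gB] ∪ (Set.range ![gA, gB])⁻¹ = ({gA, gB, gA⁻¹, gB⁻¹} : Set DH) := by
  rw [Matrix.range_cons_cons_empty, Set.inv_insert, Set.inv_singleton, Set.insert_union,
    Set.singleton_union]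

lemma wordLen_le_iff {g : DH} {n : ℕ} : wordLen g ≤ n ↔ g ∈ wordBall ![gA, gB] n := by
  rw [mem_wordBall_iff_exists_list, range_gens_union_inv]
  constructor
  · intro hn
    have hg : g ∈ Submonoid.closure ({gA, gB, gA⁻¹, gB⁻¹} : Set DH) := by
      rw [← range_gens_union_inv, ← Subgroup.closure_toSubmonoid, closure_range_gens]
      trivial
    obtain ⟨l, hl, hprod⟩ := Submonoid.exists_list_of_mem_closure hg
    have hlengths : {m | ∃ l : List DH, l.length = m ∧
        (∀ s ∈ l, s ∈ ({gA, gB, gA⁻¹, gB⁻¹} : Set DH)) ∧ l.prod = g}.Nonempty :=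
      ⟨l.length, l, rfl, hl, hprod⟩
    obtain ⟨l', hlen, hl', hprod'⟩ := Nat.sInf_mem hlengths
    exact ⟨l', hlen.trans_le hn, hl', hprod'⟩
  · rintro ⟨l, hlen, hl, hprod⟩
    have hle : wordLen g ≤ l.length := Nat.sInf_le ⟨l, rfl, hl, hprod⟩
    exact hle.trans hlen

lemma Ball_eq_wordBall (n : ℕ) : Ball n = wordBall ![gA, gB] n := by
  ext g
  rw [Ball, Set.mem_ofPred_eq, dW, mul_one, wordLen_le_iff, inv_mem_wordBall]

lemma gC_pow_eq_word {s t u : ℕ} (hu : u ≤ s) :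
    gC ^ (s * t + u) =
      gA ^ u * gB * gA ^ (s - u) * gB ^ t * (gA ^ s)⁻¹ * (gB ^ (t + 1))⁻¹ := by
  simp only [← zpow_natCast, gA_zpow, gB_zpow, gC_zpow, Nat.cast_sub hu]
  ext <;> simp [gB, mul_def, inv_def] <;> ring

lemma gC_pow_mem_wordBall {s t u : ℕ} (hu : u ≤ s) :
    gC ^ (s * t + u) ∈ wordBall ![gA, gB] (2 * (s + t + 1)) := by
  have hA (n : ℕ) : gA ^ n ∈ wordBall ![gA, gB] n := pow_mem_wordBall (gen_mem_wordBall 0) n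
  have hB (n : ℕ) : gB ^ n ∈ wordBall ![gA, gB] n := pow_mem_wordBall (gen_mem_wordBall 1) n
  rw [gC_pow_eq_word hu, show 2 * (s + t + 1) = u + 1 + (s - u) + t + s + (t + 1) by lia]
  exact mul_mem_wordBall (mul_mem_wordBall (mul_mem_wordBall (mul_mem_wordBall
    (mul_mem_wordBall (hA u) (gen_mem_wordBall 1)) (hA _)) (hB t)) (inv_mem_wordBall.2 (hA s)))
    (inv_mem_wordBall.2 (hB _))

lemma exists_gC_pow_mem_wordBall {k n : ℕ} (hk : k ≤ n ^ 2) :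
    ∃ L ≤ 6 * n, (L : ℝ) ≤ 6 * √k ∧ gC ^ k ∈ wordBall ![gA, gB] L := by
  suffices ∃ L : ℕ, (L : ℝ) ≤ 6 * √k ∧ gC ^ k ∈ wordBall ![gA, gB] L by
    obtain ⟨L, hL, hmem⟩ := this
    have hkn : √k ≤ n := Real.sqrt_le_left n.cast_nonneg |>.2 (mod_cast hk)
    exact ⟨L, by exact_mod_cast hL.trans (mul_le_mul_of_nonneg_left hkn (by norm_num)), hL, hmem⟩
  rcases eq_or_ne k 0 with rfl | hk0
  · exact ⟨0, by simp, by simpa using one_mem_wordBall 0⟩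
  set s := Nat.sqrt k
  have hs : 0 < s := Nat.sqrt_pos.2 hk0.bot_lt
  refine ⟨2 * (s + k / s + 1), ?_, ?_⟩
  · have hs1 : (1 : ℝ) ≤ s := mod_cast hs
    have hle : (s : ℝ) ≤ √k := Real.nat_sqrt_le_real_sqrt
    have hlt : √k ≤ s + 1 := Real.real_sqrt_le_nat_sqrt_succ
    have hdiv : (k / s : ℕ) ≤ √k * √k / s := by
      rw [Real.mul_self_sqrt k.cast_nonneg]
      exact Nat.cast_div_le
    have hsum : √k * √k / s ≤ 3 * √k - s - 1 := by
      rw [div_le_iff₀ (by positivity)]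
      nlinarith
    push_cast
    linarith
  · have hmod := gC_pow_mem_wordBall (t := k / s) (Nat.mod_lt k hs).le
    rwa [Nat.div_add_mod] at hmod

lemma centralZone_subset (n : ℕ) :
    centralZone ![gA, gB] gC (7 * n) (4 * n ^ 2) ⊆ centralZone ![gA, gB] gC (21 * n) 0 := by
  intro g hg
  obtain ⟨y, hy, i, hi, rfl⟩ := mem_centralZone.1 hg
  obtain ⟨L, hL, -, hmem⟩ := exists_gC_pow_mem_wordBall (n := 2 * n) (k := i) (by lia)
  rw [← mem_coe, coe_centralZone_zero]
  exact wordBall_mono (by lia) (mul_mem_wordBall hy hmem)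

lemma tsum_Ball (n : ℕ) (F : DH → ℝ) :
    ∑' x : Ball n, F x = ∑ x ∈ centralZone ![gA, gB] gC n 0, F x := by
  rw [← Finset.tsum_subtype', coe_centralZone_zero, Ball_eq_wordBall]

lemma lpSeminorm_wordGradient_eq_tsum {X : Type*} [NormedAddCommGroup X] [NormedSpace ℝ X] {p : ℝ}
    (hp : 1 ≤ p) (n : ℕ) (f : DH → X) :
    lpSeminorm hp (centralZone ![gA, gB] gC n 0 ×ˢ univ) (wordGradient X ![gA, gB] f) =
      (∑' x : Ball n, (‖f (↑x * gA) - f ↑x‖ ^ p + ‖f (↑x * gB) - f ↑x‖ ^ p)) ^ (1 / p) := by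
  rw [tsum_Ball n fun x ↦ ‖f (x * gA) - f x‖ ^ p + ‖f (x * gB) - f x‖ ^ p, lpSeminorm_apply,
    sum_product]
  simp [wordGradient_apply]

lemma lpSeminorm_rpow_eq_tsum {X : Type*} [NormedAddCommGroup X] [NormedSpace ℝ X] {p : ℝ}
    (hp : 1 ≤ p) (q : ℝ) (n k : ℕ) (f : DH → X) :
    lpSeminorm hp (centralZone ![gA, gB] gC n 0) (rightTranslation X (gC ^ k) f - f) ^ q =
      (∑' x : Ball n, ‖f (↑x * gC ^ k) - f ↑x‖ ^ p) ^ (q / p) := by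
  rw [tsum_Ball n fun x ↦ ‖f (x * gC ^ k) - f x‖ ^ p, lpSeminorm_rpow]
  rfl

end DH

open DH in
theorem local_pq_poincare_general.{u} {η p q : ℝ} (hη : 0 < η) (hq : 2 ≤ q) (hp : 1 < p)
    (hpq : p ≤ q) :
    ∃ K : ℝ, 0 < K ∧
      ∀ (X : Type u) [NormedAddCommGroup X] [NormedSpace ℝ X], HasPowerModulus η q X →
        ∀ (n : ℕ) (f : DH → X),
          (∑ k ∈ Finset.Icc 1 (n ^ 2),
              (k : ℝ) ^ (-1 - q / 2) *
                (∑' x : Ball n, ‖f (↑x * gC ^ k) - f ↑x‖ ^ p) ^ (q / p)) ^ (1 / q) ≤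
            K * (∑' x : Ball (21 * n),
              (‖f (↑x * gA) - f ↑x‖ ^ p + ‖f (↑x * gB) - f ↑x‖ ^ p)) ^ (1 / p) := by
  obtain ⟨κ, hκ, hgap⟩ := exists_hasMidpointGap_lpSeminorm hη hp hq hpq
  have hr : 0 < 1 - (√2)⁻¹ := sub_pos.2 inv_sqrt_two_lt_one
  set K := 3 ^ q * (1 - (√2)⁻¹) ^ (-q) * (1 - (√2)⁻¹) ^ (-q) * 6 ^ q * (1 + κ⁻¹)
  refine ⟨K ^ (1 / q), by positivity, fun X _ _ hX n f ↦ ?_⟩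
  have hvertical := sum_rpow_mul_rightTranslation_pow_sub_le hp.le gC_mem_center hκ (hgap X hX)
    (by linarith) (by norm_num) (fun k ↦ exists_gC_pow_mem_wordBall (n := n)) n f
  rw [show n + 6 * n = 7 * n by ring] at hvertical
  have hdomain := lpSeminorm_mono hp.le (Finset.product_subset_product_left
    (t := Finset.univ) (centralZone_subset n)) (wordGradient X ![gA, gB] f)
  rw [← lpSeminorm_wordGradient_eq_tsum hp.le]
  simp only [← lpSeminorm_rpow_eq_tsum hp.le]
  set S := ∑ k ∈ Finset.Icc 1 (n ^ 2), (k : ℝ) ^ (-1 - q / 2) *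
    lpSeminorm hp.le (centralZone ![gA, gB] gC n 0) (rightTranslation X (gC ^ k) f - f) ^ q
  calc S ^ (1 / q)
      ≤ (K * lpSeminorm hp.le (centralZone ![gA, gB] gC (21 * n) 0 ×ˢ Finset.univ)
          (wordGradient X ![gA, gB] f) ^ q) ^ (1 / q) := by
        have hS : 0 ≤ S := by positivity
        exact Real.rpow_le_rpow hS (hvertical.trans (by gcongr)) (by positivity)
    _ = _ := by
        rw [Real.mul_rpow (by positivity) (by positivity), ← Real.rpow_mul (apply_nonneg _ _),
          mul_one_div_cancel (by positivity), Real.rpow_one]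

open DH in
/-- Theorem 3.1: the local `(p,q)` vertical-versus-horizontal Poincaré inequality
on the discrete Heisenberg group. -/
theorem local_pq_poincare (η : ℝ) (hη : η ∈ Set.Ioo (0 : ℝ) 1)
    (q p : ℝ) (hq : 2 ≤ q) (hp : 1 < p) (hpq : p ≤ q) :
    ∃ K : ℝ, 0 < K ∧
      ∀ (X : Type) [NormedAddCommGroup X] [NormedSpace ℝ X] [CompleteSpace X],
        (∀ ε ∈ Set.Ioo (0 : ℝ) 1, ∀ x y : X, ‖x‖ = 1 → ‖y‖ = 1 → ε ≤ ‖x - y‖ →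
          ‖x + y‖ ≤ 2 * (1 - (η * ε) ^ q)) →
        ∀ (n : ℕ) (f : DH → X),
          (∑ k ∈ Finset.Icc 1 (n ^ 2),
              (k : ℝ) ^ (-1 - q / 2) *
                (∑' x : Ball n, ‖f (↑x * gC ^ k) - f ↑x‖ ^ p) ^ (q / p)) ^ (1 / q) ≤
            K * (∑' x : Ball (21 * n),
              (‖f (↑x * gA) - f ↑x‖ ^ p + ‖f (↑x * gB) - f ↑x‖ ^ p)) ^ (1 / p) := by
  obtain ⟨K, hK, hpoincare⟩ := local_pq_poincare_general hη.1 hq hp hpq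
  exact ⟨K, hK, fun X _ _ _ ↦ hpoincare X⟩
end

section
/- For every η ∈ (0,1), q ∈ [2,∞) and p ∈ (1,q] there exists a constant K = K(η,p,q) ∈ (0,∞) with the following property. If (X,‖·‖_X) is a Banach space satisfying δ_X(ε) ≥ (ηε)^q for every ε ∈ (0,1), then for every finitely supported f : ℍ → X (i.e., f(x) = 0 for all but finitely many x ∈ ℍ) one has (∑_{k=1}^{∞} k^{−1−q/2} (∑_{x ∈ ℍ} ‖f(xc^k) − f(x)‖_X^p)^{q/p})^{1/q} ≤ K (∑_{x ∈ ℍ} (‖f(xa) − f(x)‖_X^p + ‖f(xb) − f(x)‖_X^p))^{1/p}. -/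
/-!
Let `Y = ℓ^p(ℍ; X)`, on which `ℍ` acts by right translation through linear isometries `A`, `B`, `C`.
Uniform convexity of power type becomes a two-point inequality on `X`, which Minkowski's inequality
transfers to `Y`. Along the dyadic averages `M_m = 2⁻ᵐ ∑_{j < 2ᵐ} Cʲ` it controls the differences
`D_m = (1 - C ^ 2ᵐ) M_m` by `κ ∑ ‖D_m u‖ ^ q ≤ ‖u‖ ^ q`.

Take `u = A v - v` and `u = B v - v`. Since `C ^ (s t)` is the commutator of `A ^ s` and `B ^ t`,
choosing `s ≈ t ≈ 2^(m/2)` bounds `C ^ 2ᵐ - 1` on `D_m v` by `2^(m/2)` times `‖D_m u‖`, and the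
identity `D_{m+1} = (1 + C ^ 2ᵐ)² D_m / 2` upgrades this to a bound on `D_m v` itself:
`2^(-m/2) ‖D_m v‖` is at most `2^(-1/2)` times its successor plus a `q`-summable term. As
`C ^ k v - v` is controlled by the `D_m v` with `2ᵐ ≤ k`, a discrete Hardy inequality finishes.
-/

open Filter Topology
open scoped commutatorElement

/-! ### Real inequalities -/

theorem rpow_rpow_div {p t : ℝ} (hp : p ≠ 0) (ht : 0 ≤ t) (q : ℝ) : (t ^ p) ^ (q / p) = t ^ q := by
  rw [← Real.rpow_mul ht, mul_div_cancel₀ _ hp]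

theorem rpow_add_rpow_sub_one_mul_sub_le {r s t : ℝ} (hr : 1 ≤ r) (ht : 0 ≤ t) (hts : t ≤ s) :
    t ^ r + s ^ (r - 1) * (s - t) ≤ s ^ r := by
  have rpow_eq_mul {u : ℝ} (hu : 0 ≤ u) : u ^ r = u ^ (r - 1) * u := by
    rw [← Real.rpow_add_one' hu (by linarith), sub_add_cancel]
  have hmono : t ^ (r - 1) * t ≤ s ^ (r - 1) * t := by gcongr
  rw [rpow_eq_mul ht, rpow_eq_mul (ht.trans hts)]
  linarith

theorem strongConvexOn_rpow {p : ℝ} (hp : 1 ≤ p) (hp2 : p ≤ 2) :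
    StrongConvexOn (Set.Icc 0 1) (p * (p - 1)) fun t : ℝ => t ^ p := by
  simp only [strongConvexOn_iff_convex, Real.norm_eq_abs, sq_abs]
  refine convexOn_of_hasDerivWithinAt2_nonneg (convex_Icc 0 1)
    (f' := fun t => p * t ^ (p - 1) - p * (p - 1) * t)
    (f'' := fun t => p * ((p - 1) * t ^ (p - 1 - 1)) - p * (p - 1)) ?_ ?_ ?_ ?_
  · exact ((Real.continuous_rpow_const (by linarith)).sub (by fun_prop)).continuousOn
  all_goals
    intro t ht
    rw [interior_Icc] at ht
  · refine (((Real.hasDerivAt_rpow_const (Or.inl ht.1.ne')).sub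
      ((hasDerivAt_pow 2 t).const_mul (p * (p - 1) / 2))).congr_deriv ?_).hasDerivWithinAt
    norm_num
    ring
  · refine (((Real.hasDerivAt_rpow_const (Or.inl ht.1.ne')).const_mul p).sub
      ((hasDerivAt_id t).const_mul (p * (p - 1)))).congr_deriv ?_ |>.hasDerivWithinAt
    simp
  · have one_le : 1 ≤ t ^ (p - 1 - 1) :=
      Real.one_le_rpow_of_pos_of_le_one_of_nonpos ht.1 ht.2.le (by linarith)
    have coeff_nonneg : 0 ≤ p * (p - 1) := mul_nonneg (by linarith) (by linarith)
    linarith [le_mul_of_one_le_right coeff_nonneg one_le]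

theorem rpow_midpoint_add_le {p b : ℝ} (hp : 1 ≤ p) (hp2 : p ≤ 2) (hb0 : 0 ≤ b) (hb1 : b ≤ 1) :
    ((1 + b) / 2) ^ p + p * (p - 1) / 8 * (1 - b) ^ 2 ≤ (1 + b ^ p) / 2 := by
  have h := (strongConvexOn_rpow hp hp2).2 (Set.right_mem_Icc.2 zero_le_one) ⟨hb0, hb1⟩
    (by norm_num : (0 : ℝ) ≤ 1 / 2) (by norm_num : (0 : ℝ) ≤ 1 / 2) (by norm_num)
  simp only [smul_eq_mul, Real.one_rpow, Real.norm_eq_abs, sq_abs, ← mul_add] at h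
  rw [div_eq_inv_mul, ← one_div]
  linarith

theorem powerMean_mono {p p' a b : ℝ} (hp' : 0 < p') (hpp : p' ≤ p) (ha : 0 ≤ a) (hb : 0 ≤ b) :
    ((a ^ p' + b ^ p') / 2) ^ (p / p') ≤ (a ^ p + b ^ p) / 2 := by
  have h := (convexOn_rpow (p := p / p') (by rwa [one_le_div hp'])).2
    (Real.rpow_nonneg ha p' : (0 : ℝ) ≤ _) (Real.rpow_nonneg hb p' : (0 : ℝ) ≤ _)
    (by norm_num : (0 : ℝ) ≤ 1 / 2) (by norm_num : (0 : ℝ) ≤ 1 / 2) (by norm_num)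
  simp only [smul_eq_mul, ← mul_add, rpow_rpow_div hp'.ne' ha, rpow_rpow_div hp'.ne' hb] at h
  simpa only [one_div, ← div_eq_inv_mul] using h

theorem mul_add_rpow_le {q ρ x y : ℝ} (hq : 1 ≤ q) (hρ0 : 0 ≤ ρ) (hρ1 : ρ < 1) (hx : 0 ≤ x)
    (hy : 0 ≤ y) :
    (ρ * x + y) ^ q ≤ ρ * x ^ q + (1 - ρ) * (((1 - ρ)⁻¹) ^ q * y ^ q) := by
  have hρ : 0 < 1 - ρ := by linarith
  have hy' : 0 ≤ (1 - ρ)⁻¹ * y := by positivity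
  have h := (convexOn_rpow hq).2 hx hy' hρ0 hρ.le (by ring)
  simp only [smul_eq_mul] at h
  rwa [mul_inv_cancel_left₀ hρ.ne', Real.mul_rpow (by positivity) hy] at h

theorem add_rpow_le_two_rpow_mul {a b q : ℝ} (hq : 1 ≤ q) (ha : 0 ≤ a) (hb : 0 ≤ b) :
    (a + b) ^ q ≤ 2 ^ q * (a ^ q + b ^ q) := by
  have h := mul_add_rpow_le (ρ := 1 / 2) hq (by norm_num) (by norm_num)
    (by positivity : 0 ≤ 2 * a) hb
  rw [Real.mul_rpow two_pos.le ha, one_div, inv_mul_cancel_left₀ two_ne_zero] at h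
  norm_num at h
  have : 0 ≤ (2 : ℝ) ^ q * (a ^ q + b ^ q) := by positivity
  linarith

/-! ### Sequences contracting up to a forcing term -/

section Recursion

variable {q ρ : ℝ} {T d : ℕ → ℝ}

theorem sum_succ_rpow_le_of_le_mul_add (hq : 1 ≤ q) (hρ0 : 0 ≤ ρ) (hρ1 : ρ < 1)
    (hT : ∀ n, 0 ≤ T n) (hd : ∀ n, 0 ≤ d n) (hT0 : T 0 = 0)
    (h : ∀ n, T (n + 1) ≤ ρ * T n + d n) (N : ℕ) :
    ∑ n ∈ Finset.range N, T (n + 1) ^ q ≤ ((1 - ρ)⁻¹) ^ q * ∑ n ∈ Finset.range N, d n ^ q := by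
  have hstep : ∑ n ∈ Finset.range N, T (n + 1) ^ q ≤ ∑ n ∈ Finset.range N,
      (ρ * T n ^ q + (1 - ρ) * (((1 - ρ)⁻¹) ^ q * d n ^ q)) :=
    Finset.sum_le_sum fun n _ => (Real.rpow_le_rpow (hT _) (h n) (by linarith)).trans
      (mul_add_rpow_le hq hρ0 hρ1 (hT n) (hd n))
  have hshift : ∑ n ∈ Finset.range N, T n ^ q ≤ ∑ n ∈ Finset.range N, T (n + 1) ^ q := by
    have hsucc := Finset.sum_range_succ (fun n => T n ^ q) N
    rw [Finset.sum_range_succ', hT0, Real.zero_rpow (by linarith), add_zero] at hsucc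
    rw [hsucc]
    exact le_add_of_nonneg_right (Real.rpow_nonneg (hT N) q)
  simp only [Finset.sum_add_distrib, ← Finset.mul_sum] at hstep
  refine le_of_mul_le_mul_left ?_ (sub_pos.2 hρ1)
  linarith [mul_le_mul_of_nonneg_left hshift hρ0]

theorem sum_rpow_le_of_le_mul_succ_add_s11 {D : ℝ} (hq : 1 ≤ q) (hρ0 : 0 ≤ ρ) (hρ1 : ρ < 1)
    (hT : ∀ n, 0 ≤ T n) (hd : ∀ n, 0 ≤ d n) (hlim : Tendsto T atTop (𝓝 0))
    (h : ∀ n, T n ≤ ρ * T (n + 1) + d n) (hD : ∀ N, ∑ n ∈ Finset.range N, d n ^ q ≤ D) (N : ℕ) :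
    ∑ n ∈ Finset.range N, T n ^ q ≤ ((1 - ρ)⁻¹) ^ q * D := by
  have hρ : 0 < 1 - ρ := sub_pos.2 hρ1
  have hTq (n : ℕ) : 0 ≤ T n ^ q := Real.rpow_nonneg (hT n) q
  have hbound (M : ℕ) : (1 - ρ) * ∑ n ∈ Finset.range M, T n ^ q
      ≤ ρ * T M ^ q + (1 - ρ) * (((1 - ρ)⁻¹) ^ q * D) := by
    have hstep : ∑ n ∈ Finset.range M, T n ^ q ≤ ∑ n ∈ Finset.range M,
        (ρ * T (n + 1) ^ q + (1 - ρ) * (((1 - ρ)⁻¹) ^ q * d n ^ q)) :=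
      Finset.sum_le_sum fun n _ => (Real.rpow_le_rpow (hT _) (h n) (by linarith)).trans
        (mul_add_rpow_le hq hρ0 hρ1 (hT _) (hd n))
    have hshift : ∑ n ∈ Finset.range M, T (n + 1) ^ q
        ≤ ∑ n ∈ Finset.range M, T n ^ q + T M ^ q := by
      rw [← Finset.sum_range_succ, Finset.sum_range_succ']
      exact le_add_of_nonneg_right (hTq 0)
    have hforcing : (1 - ρ) * (((1 - ρ)⁻¹) ^ q * ∑ n ∈ Finset.range M, d n ^ q)
        ≤ (1 - ρ) * (((1 - ρ)⁻¹) ^ q * D) := by gcongr; exact hD M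
    simp only [Finset.sum_add_distrib, ← Finset.mul_sum] at hstep
    linarith [mul_le_mul_of_nonneg_left hshift hρ0]
  have hlim' : Tendsto (fun M => ρ * T M ^ q + (1 - ρ) * (((1 - ρ)⁻¹) ^ q * D)) atTop
      (𝓝 ((1 - ρ) * (((1 - ρ)⁻¹) ^ q * D))) := by
    have hq0 : 0 < q := by linarith
    simpa [hq0.ne'] using ((hlim.rpow_const (Or.inr hq0.le)).const_mul ρ).add_const _
  refine le_of_mul_le_mul_left (ge_of_tendsto hlim' ?_) hρ
  filter_upwards [eventually_ge_atTop N] with M hNM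
  refine le_trans ?_ (hbound M)
  gcongr
  exact fun n _ _ => hTq n

theorem hardy_sum_partialSum_div_pow_rpow_le {r : ℝ} (hq : 1 ≤ q) (hr : 1 < r) {u : ℕ → ℝ}
    (hu : ∀ n, 0 ≤ u n) (N : ℕ) :
    ∑ n ∈ Finset.range N, ((∑ m ∈ Finset.range (n + 1), u m) / r ^ n) ^ q
      ≤ ((1 - r⁻¹)⁻¹) ^ q * ∑ n ∈ Finset.range N, (u n / r ^ n) ^ q := by
  have hr0 : 0 < r := by linarith
  have h := sum_succ_rpow_le_of_le_mul_add (T := fun n => r * (∑ m ∈ Finset.range n, u m) / r ^ n)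
    (d := fun n => u n / r ^ n) hq (by positivity) (inv_lt_one_of_one_lt₀ hr)
    (fun n => div_nonneg (mul_nonneg hr0.le (Finset.sum_nonneg fun m _ => hu m)) (by positivity))
    (fun n => div_nonneg (hu n) (by positivity)) (by simp)
    (fun n => le_of_eq (by rw [Finset.sum_range_succ]; field_simp; ring)) N
  refine le_of_eq_of_le (Finset.sum_congr rfl fun n _ => ?_) h
  rw [pow_succ', mul_div_mul_left _ _ hr0.ne']

end Recursion

theorem sum_range_le_of_le_dyadic {φ ψ : ℕ → ℝ}
    (h : ∀ n k, 2 ^ n ≤ k + 1 → k + 1 < 2 ^ (n + 1) → φ k ≤ ((2 : ℝ) ^ n)⁻¹ * ψ n) (M : ℕ) :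
    ∑ k ∈ Finset.range (2 ^ M - 1), φ k ≤ ∑ n ∈ Finset.range M, ψ n := by
  induction M with
  | zero => simp
  | succ M ih =>
    have : 2 ^ (M + 1) = 2 * 2 ^ M := pow_succ' 2 M
    have := Nat.one_le_two_pow (n := M)
    rw [← Finset.sum_range_add_sum_Ico _ (by omega : 2 ^ M - 1 ≤ 2 ^ (M + 1) - 1),
      Finset.sum_range_succ]
    refine add_le_add ih ?_
    have hcard : (Finset.Ico (2 ^ M - 1) (2 ^ (M + 1) - 1)).card = 2 ^ M := by
      rw [Nat.card_Ico]
      omega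
    refine (Finset.sum_le_card_nsmul _ _ (((2 : ℝ) ^ M)⁻¹ * ψ M) fun k hk => ?_).trans_eq ?_
    · rw [Finset.mem_Ico] at hk
      exact h M k (by omega) (by omega)
    · rw [hcard, nsmul_eq_mul, Nat.cast_pow, Nat.cast_ofNat, mul_inv_cancel_left₀ (by positivity)]

theorem two_pow_eq_sqrt_two_pow (n : ℕ) : (2 : ℝ) ^ n = √2 ^ (2 * n) := by
  rw [pow_mul, Real.sq_sqrt two_pos.le]

theorem rpow_neg_one_sub_half_le {q x : ℝ} (hq : 0 ≤ q) {n : ℕ} (hx : 2 ^ n ≤ x) :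
    x ^ (-1 - q / 2) ≤ ((2 : ℝ) ^ n)⁻¹ * ((√2 ^ n) ^ q)⁻¹ := by
  have hpow : (√2 ^ n) ^ q = ((2 : ℝ) ^ n) ^ (q / 2) := by
    rw [two_pow_eq_sqrt_two_pow, mul_comm, pow_mul, ← Real.rpow_two,
      rpow_rpow_div two_ne_zero (by positivity)]
  calc x ^ (-1 - q / 2) ≤ ((2 : ℝ) ^ n) ^ (-1 - q / 2) :=
        Real.rpow_le_rpow_of_nonpos (by positivity) hx (by linarith)
    _ = ((2 : ℝ) ^ n)⁻¹ * ((√2 ^ n) ^ q)⁻¹ := by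
        rw [hpow, ← Real.rpow_neg (by positivity), ← Real.rpow_neg_one,
          ← Real.rpow_add (by positivity), sub_eq_add_neg]

theorem inv_one_sub_inv_sqrt_two_le : (1 - (√2)⁻¹)⁻¹ ≤ 4 := by
  have hsqrt : (√2)⁻¹ ≤ (3 / 4 : ℝ) := by
    rw [inv_le_comm₀ (by positivity) (by norm_num)]
    exact Real.le_sqrt_of_sq_le (by norm_num)
  rw [inv_le_comm₀ (by linarith) (by norm_num)]
  linarith

/-! ### Two-point convexity -/

section Convexity

variable {X : Type*} [NormedAddCommGroup X]

/-- Uniform convexity of power type `q` with constant `η`, that is `δ_X(ε) ≥ (η ε) ^ q`. -/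
def HasPowerTypeConvexity (X : Type*) [NormedAddCommGroup X] (η q : ℝ) : Prop :=
  ∀ ε ∈ Set.Ioo (0 : ℝ) 1, ∀ x y : X, ‖x‖ = 1 → ‖y‖ = 1 → ε ≤ ‖x - y‖ →
    ‖x + y‖ ≤ 2 * (1 - (η * ε) ^ q)

/-- The two-point inequality through which uniform convexity is used. Taking the `ℓ ^ p` mean on the
right makes it pass from `X` to `ℓ ^ p(X)` with the same constant. -/
def TwoPointConvex (X : Type*) [NormedAddCommGroup X] (p q κ : ℝ) : Prop :=
  ∀ x y : X, (‖x + y‖ / 2) ^ q + κ * ‖x - y‖ ^ q ≤ ((‖x‖ ^ p + ‖y‖ ^ p) / 2) ^ (q / p)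

theorem TwoPointConvex.mono_exponent {p p' q κ : ℝ} (h : TwoPointConvex X p' q κ) (hp' : 0 < p')
    (hpp : p' ≤ p) (hq : 0 ≤ q) : TwoPointConvex X p q κ := fun x y =>
  calc (‖x + y‖ / 2) ^ q + κ * ‖x - y‖ ^ q ≤ ((‖x‖ ^ p' + ‖y‖ ^ p') / 2) ^ (q / p') := h x y
    _ = (((‖x‖ ^ p' + ‖y‖ ^ p') / 2) ^ (p / p')) ^ (q / p) := by
        rw [← Real.rpow_mul (by positivity), mul_comm, div_mul_div_cancel₀ (hp'.trans_le hpp).ne']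
    _ ≤ ((‖x‖ ^ p + ‖y‖ ^ p) / 2) ^ (q / p) := by
        have hp : 0 ≤ p := (hp'.trans_le hpp).le
        gcongr
        exact powerMean_mono hp' hpp (norm_nonneg x) (norm_nonneg y)

theorem TwoPointConvex.of_norm_eq {p q κ : ℝ} (h : TwoPointConvex X p q κ) (hp : p ≠ 0)
    {x y : X} (hxy : ‖x‖ = ‖y‖) : (‖x + y‖ / 2) ^ q + κ * ‖x - y‖ ^ q ≤ ‖x‖ ^ q := by
  have := h x y
  rwa [← hxy, add_self_div_two, rpow_rpow_div hp (norm_nonneg x)] at this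

variable [NormedSpace ℝ X]

theorem HasPowerTypeConvexity.norm_add_le_of_one_sub_norm_lt {η q : ℝ}
    (hX : HasPowerTypeConvexity X η q) (hη : 0 ≤ η) {x y : X} (hx : ‖x‖ = 1) (hy : ‖y‖ ≤ 1)
    (hxy : 1 - ‖y‖ < ‖x - y‖ / 4) :
    ‖x + y‖ ≤ 1 + ‖y‖ - (η * (‖x - y‖ / 4)) ^ q := by
  have hdist : ‖x - y‖ ≤ 1 + ‖y‖ := hx ▸ norm_sub_le x y
  have hb : 0 < ‖y‖ := by linarith
  set z := ‖y‖⁻¹ • y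
  have hyz : ‖y‖ • z = y := smul_inv_smul₀ hb.ne' y
  have hz1 : ‖z‖ = 1 := norm_smul_inv_norm (𝕜 := ℝ) (norm_pos_iff.1 hb)
  have hzy : ‖z - y‖ = 1 - ‖y‖ := by
    have : z - y = (1 - ‖y‖) • z := by rw [sub_smul, one_smul, hyz]
    rw [this, norm_smul, hz1, mul_one, Real.norm_of_nonneg (by linarith)]
  have hxz : ‖x - y‖ / 4 ≤ ‖x - z‖ := by linarith [norm_sub_le_norm_sub_add_norm_sub x z y]
  have hmod := hX (‖x - y‖ / 4) ⟨by linarith, by linarith⟩ x z hx hz1 hxz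
  have hpow : 0 ≤ (η * (‖x - y‖ / 4)) ^ q := by positivity
  calc ‖x + y‖ = ‖‖y‖ • (x + z) + (1 - ‖y‖) • x‖ := by
        rw [smul_add, hyz, sub_smul, one_smul]; abel_nf
    _ ≤ ‖y‖ * ‖x + z‖ + (1 - ‖y‖) := by
        refine (norm_add_le _ _).trans_eq ?_
        rw [norm_smul, norm_smul, hx, norm_norm, mul_one, Real.norm_of_nonneg (by linarith)]
    _ ≤ ‖y‖ * (2 * (1 - (η * (‖x - y‖ / 4)) ^ q)) + (1 - ‖y‖) := by gcongr
    _ ≤ 1 + ‖y‖ - (η * (‖x - y‖ / 4)) ^ q := by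
        linarith [le_mul_of_one_le_left hpow (by linarith : 1 ≤ 2 * ‖y‖)]

/-- Either the norms differ, and strict convexity of `t ^ p` gains, or they nearly agree, and
the modulus of convexity does. -/
theorem HasPowerTypeConvexity.rpow_midpoint_add_le_of_norm_eq_one {η p q : ℝ}
    (hX : HasPowerTypeConvexity X η q) (hη : 0 ≤ η) (hη1 : η ≤ 1) (hq : 2 ≤ q) (hp : 1 ≤ p)
    (hp2 : p ≤ 2) {x y : X} (hx : ‖x‖ = 1) (hy : ‖y‖ ≤ 1) :
    (‖x + y‖ / 2) ^ p + (p - 1) / 8 * (η * (‖x - y‖ / 4)) ^ q ≤ (1 + ‖y‖ ^ p) / 2 := by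
  have hp1 : 0 ≤ p - 1 := sub_nonneg.2 hp
  have hsum : ‖x + y‖ ≤ 1 + ‖y‖ := hx ▸ norm_add_le x y
  have hradial := rpow_midpoint_add_le hp hp2 (norm_nonneg y) hy
  have : 0 ≤ (η * (‖x - y‖ / 4)) ^ q := by positivity
  rcases le_or_gt (‖x - y‖ / 4) (1 - ‖y‖) with h | h
  · have hgap : (η * (‖x - y‖ / 4)) ^ q ≤ (1 - ‖y‖) ^ 2 :=
      calc (η * (‖x - y‖ / 4)) ^ q ≤ (1 - ‖y‖) ^ q :=
            Real.rpow_le_rpow (by positivity)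
              ((mul_le_of_le_one_left (by positivity) hη1).trans h) (by linarith)
        _ ≤ (1 - ‖y‖) ^ 2 := by
            rw [← Real.rpow_two]
            exact Real.rpow_le_rpow_of_exponent_ge_of_imp (sub_nonneg.2 hy)
              (by linarith [norm_nonneg y]) hq (by intros; linarith)
    calc (‖x + y‖ / 2) ^ p + (p - 1) / 8 * (η * (‖x - y‖ / 4)) ^ q
        ≤ ((1 + ‖y‖) / 2) ^ p + p * (p - 1) / 8 * (1 - ‖y‖) ^ 2 := by
          gcongr
          exact le_mul_of_one_le_left hp1 hp
      _ ≤ (1 + ‖y‖ ^ p) / 2 := hradial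
  · have hangular := hX.norm_add_le_of_one_sub_norm_lt hη hx hy h
    have hdist : ‖x - y‖ ≤ 1 + ‖y‖ := hx ▸ norm_sub_le x y
    have htangent := rpow_add_rpow_sub_one_mul_sub_le (s := (1 + ‖y‖) / 2) (t := ‖x + y‖ / 2) hp
      (by positivity) (by linarith)
    have hderiv : 1 / 2 ≤ ((1 + ‖y‖) / 2) ^ (p - 1) :=
      calc (1 / 2 : ℝ) ≤ (1 + ‖y‖) / 2 := by linarith [norm_nonneg y]
        _ ≤ ((1 + ‖y‖) / 2) ^ (p - 1) :=
          Real.self_le_rpow_of_le_one (by positivity) (by linarith) (by linarith)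
    have hgain : (p - 1) / 8 * (η * (‖x - y‖ / 4)) ^ q
        ≤ ((1 + ‖y‖) / 2) ^ (p - 1) * ((1 + ‖y‖) / 2 - ‖x + y‖ / 2) :=
      calc (p - 1) / 8 * (η * (‖x - y‖ / 4)) ^ q ≤ 1 / 2 * (1 / 2 * (η * (‖x - y‖ / 4)) ^ q) := by
            rw [← mul_assoc]; gcongr; linarith
        _ ≤ _ := by gcongr; linarith
    have : 0 ≤ p * (p - 1) / 8 * (1 - ‖y‖) ^ 2 := by positivity
    linarith

theorem HasPowerTypeConvexity.rpow_div_midpoint_add_le_of_norm_eq_one {η p q : ℝ}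
    (hX : HasPowerTypeConvexity X η q) (hη : 0 ≤ η) (hη1 : η ≤ 1) (hq : 2 ≤ q) (hp : 1 ≤ p)
    (hp2 : p ≤ 2) {x y : X} (hx : ‖x‖ = 1) (hy : ‖y‖ ≤ 1) :
    (‖x + y‖ / 2) ^ q + (p - 1) / 8 * (η / 8) ^ q * ‖x - y‖ ^ q
      ≤ ((1 + ‖y‖ ^ p) / 2) ^ (q / p) := by
  have hp0 : 0 < p := by linarith
  have : 0 ≤ p - 1 := sub_nonneg.2 hp
  have hr : 1 ≤ q / p := by rw [one_le_div hp0]; linarith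
  have hbase := hX.rpow_midpoint_add_le_of_norm_eq_one hη hη1 hq hp hp2 hx hy
  have hyp : ‖y‖ ^ p ≤ 1 := Real.rpow_le_one (norm_nonneg y) hy hp0.le
  obtain ⟨s, hs⟩ : ∃ s, s = (1 + ‖y‖ ^ p) / 2 := ⟨_, rfl⟩
  have hs2 : 1 / 2 ≤ s := by linarith [Real.rpow_nonneg (norm_nonneg y) p]
  have hs1 : s ≤ 1 := by linarith
  rw [← hs] at hbase ⊢
  have htangent := rpow_add_rpow_sub_one_mul_sub_le (s := s) (t := (‖x + y‖ / 2) ^ p) hr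
    (by positivity) (le_of_add_le_of_nonneg_left hbase (by positivity))
  rw [rpow_rpow_div hp0.ne' (by positivity)] at htangent
  have hderiv : (1 / 2) ^ q ≤ s ^ (q / p - 1) :=
    calc (1 / 2 : ℝ) ^ q ≤ s ^ q := by gcongr
      _ ≤ s ^ (q / p - 1) := Real.rpow_le_rpow_of_exponent_ge (by linarith) hs1
          (by linarith [div_le_self (by linarith : 0 ≤ q) hp])
  calc (‖x + y‖ / 2) ^ q + (p - 1) / 8 * (η / 8) ^ q * ‖x - y‖ ^ q
      = (‖x + y‖ / 2) ^ q + (1 / 2) ^ q * ((p - 1) / 8 * (η * (‖x - y‖ / 4)) ^ q) := by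
        rw [mul_assoc, mul_left_comm _ ((p - 1) / 8),
          ← Real.mul_rpow (by positivity) (by positivity),
          ← Real.mul_rpow (by positivity) (by positivity)]
        ring_nf
    _ ≤ (‖x + y‖ / 2) ^ q + s ^ (q / p - 1) * (s - (‖x + y‖ / 2) ^ p) := by
        gcongr
        exact le_sub_left_of_add_le hbase
    _ ≤ s ^ (q / p) := htangent

theorem TwoPointConvex.of_norm_eq_one {p q κ : ℝ} (hp : p ≠ 0) (hq : q ≠ 0)
    (h : ∀ x y : X, ‖x‖ = 1 → ‖y‖ ≤ 1 →
      (‖x + y‖ / 2) ^ q + κ * ‖x - y‖ ^ q ≤ ((1 + ‖y‖ ^ p) / 2) ^ (q / p)) :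
    TwoPointConvex X p q κ := by
  intro x y
  wlog hxy : ‖y‖ ≤ ‖x‖ generalizing x y
  · rw [add_comm x y, norm_sub_rev, add_comm (‖x‖ ^ p)]
    exact this y x (le_of_not_ge hxy)
  rcases (norm_nonneg x).eq_or_lt with h0 | h0
  · obtain rfl : x = 0 := norm_eq_zero.1 h0.symm
    obtain rfl : y = 0 := norm_le_zero_iff.1 (hxy.trans_eq h0.symm)
    simp [Real.zero_rpow, hp, hq]
  · obtain ⟨c, hc⟩ : ∃ c, c = ‖x‖ := ⟨_, rfl⟩
    rw [← hc] at h0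
    obtain ⟨x, rfl⟩ : ∃ u, x = c • u := ⟨c⁻¹ • x, (smul_inv_smul₀ h0.ne' x).symm⟩
    obtain ⟨y, rfl⟩ : ∃ u, y = c • u := ⟨c⁻¹ • y, (smul_inv_smul₀ h0.ne' y).symm⟩
    have hsmul (u : X) : ‖c • u‖ = c * ‖u‖ := norm_smul_of_nonneg h0.le u
    have hx : ‖x‖ = 1 := by
      rw [hsmul] at hc
      exact (left_eq_mul₀ h0.ne').1 hc
    rw [hsmul, hsmul, hx, mul_le_mul_iff_right₀ h0] at hxy
    calc (‖c • x + c • y‖ / 2) ^ q + κ * ‖c • x - c • y‖ ^ q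
        = c ^ q * ((‖x + y‖ / 2) ^ q + κ * ‖x - y‖ ^ q) := by
          rw [← smul_add, ← smul_sub, hsmul, hsmul, mul_div_assoc,
            Real.mul_rpow h0.le (by positivity), Real.mul_rpow h0.le (norm_nonneg _)]
          ring
      _ ≤ c ^ q * ((1 + ‖y‖ ^ p) / 2) ^ (q / p) := by gcongr; exact h x y hx hxy
      _ = ((‖c • x‖ ^ p + ‖c • y‖ ^ p) / 2) ^ (q / p) := by
          rw [← rpow_rpow_div hp h0.le, ← Real.mul_rpow (by positivity) (by positivity), hsmul,
            hsmul, hx, Real.mul_rpow h0.le (norm_nonneg y)]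
          ring_nf

theorem HasPowerTypeConvexity.twoPointConvex {η p q : ℝ} (hX : HasPowerTypeConvexity X η q)
    (hη : 0 ≤ η) (hη1 : η ≤ 1) (hq : 2 ≤ q) (hp : 1 ≤ p) :
    TwoPointConvex X p q ((min p 2 - 1) / 8 * (η / 8) ^ q) := by
  have hmin : 1 ≤ min p 2 := le_min hp one_le_two
  exact TwoPointConvex.mono_exponent
    (.of_norm_eq_one (by positivity) (by positivity) fun _ _ =>
      hX.rpow_div_midpoint_add_le_of_norm_eq_one hη hη1 hq hmin (min_le_right p 2))
    (by positivity) (min_le_left p 2) (by positivity)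

end Convexity

/-! ### The right regular representation on `ℓ ^ p` -/

section Lp

variable {α X : Type*} [NormedAddCommGroup X] {p : ENNReal} [Fact (1 ≤ p)]

/-- Minkowski's inequality, read as the triangle inequality for a series in `ℓ ^ r(ℝ²)`. -/
theorem rpow_add_rpow_le_of_hasSum {ι : Type*} {u v w : ι → ℝ} {U V W r : ℝ} (hr : 1 ≤ r)
    (hu : HasSum u U) (hv : HasSum v V) (hw : HasSum w W) (hu0 : ∀ i, 0 ≤ u i)
    (hv0 : ∀ i, 0 ≤ v i) (hw0 : ∀ i, 0 ≤ w i) (h : ∀ i, u i ^ r + v i ^ r ≤ w i ^ r) :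
    U ^ r + V ^ r ≤ W ^ r := by
  have hr0 : 0 < r := by linarith
  have : Fact (1 ≤ ENNReal.ofReal r) := ⟨ENNReal.one_le_ofReal.2 hr⟩
  have hnorm {s t : ℝ} (hs : 0 ≤ s) (ht : 0 ≤ t) :
      ‖WithLp.toLp (ENNReal.ofReal r) (s, t)‖ = (s ^ r + t ^ r) ^ r⁻¹ := by
    rw [WithLp.prod_norm_eq_add (by rwa [ENNReal.toReal_ofReal hr0.le]),
      ENNReal.toReal_ofReal hr0.le, one_div]
    simp only [WithLp.toLp_fst, WithLp.toLp_snd, Real.norm_of_nonneg hs, Real.norm_of_nonneg ht]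
  have hsum : HasSum (fun i => WithLp.toLp (ENNReal.ofReal r) (u i, v i))
      (WithLp.toLp (ENNReal.ofReal r) (U, V)) :=
    (hu.prodMk hv).mapL
      (WithLp.prodContinuousLinearEquiv (ENNReal.ofReal r) ℝ ℝ ℝ).symm.toContinuousLinearMap
  have hle := hsum.norm_le_of_bounded hw fun i => by
    rw [hnorm (hu0 i) (hv0 i), Real.rpow_inv_le_iff_of_pos
      (add_nonneg (Real.rpow_nonneg (hu0 i) r) (Real.rpow_nonneg (hv0 i) r)) (hw0 i) hr0]
    exact h i
  have hU := hu.nonneg hu0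
  have hV := hv.nonneg hv0
  rwa [hnorm hU hV, Real.rpow_inv_le_iff_of_pos
    (add_nonneg (Real.rpow_nonneg hU r) (Real.rpow_nonneg hV r)) (hw.nonneg hw0) hr0] at hle

theorem twoPointConvex_lp {q κ : ℝ} (hp : 0 < p.toReal) (hpq : p.toReal ≤ q) (hκ : 0 ≤ κ)
    (hX : TwoPointConvex X p.toReal q κ) :
    TwoPointConvex (lp (fun _ : α => X) p) p.toReal q κ := by
  intro x y
  have hq : 0 < q := hp.trans_le hpq
  obtain ⟨c, hc0, hc⟩ : ∃ c, 0 ≤ c ∧ c ^ (q / p.toReal) = κ :=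
    ⟨κ ^ (q / p.toReal)⁻¹, by positivity, Real.rpow_inv_rpow hκ (by positivity)⟩
  have hsum : HasSum (fun i => (‖x i + y i‖ / 2) ^ p.toReal) ((‖x + y‖ / 2) ^ p.toReal) := by
    simp only [Real.div_rpow (norm_nonneg _) two_pos.le]
    exact (lp.hasSum_norm hp (x + y)).div_const _
  have hdiff : HasSum (fun i => c * ‖x i - y i‖ ^ p.toReal) (c * ‖x - y‖ ^ p.toReal) :=
    (lp.hasSum_norm hp (x - y)).mul_left c
  have hmean : HasSum (fun i => (‖x i‖ ^ p.toReal + ‖y i‖ ^ p.toReal) / 2)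
      ((‖x‖ ^ p.toReal + ‖y‖ ^ p.toReal) / 2) :=
    ((lp.hasSum_norm hp x).add (lp.hasSum_norm hp y)).div_const 2
  have hsplit {s t : ℝ} (hs : 0 ≤ s) (ht : 0 ≤ t) :
      (s ^ p.toReal) ^ (q / p.toReal) + (c * t ^ p.toReal) ^ (q / p.toReal)
        = s ^ q + κ * t ^ q := by
    rw [Real.mul_rpow hc0 (by positivity), hc, rpow_rpow_div hp.ne' hs, rpow_rpow_div hp.ne' ht]
  have h := rpow_add_rpow_le_of_hasSum ((one_le_div hp).2 hpq) hsum hdiff hmean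
    (fun i => by positivity) (fun i => by positivity) (fun i => by positivity) fun i =>
      (hsplit (by positivity) (norm_nonneg _)).trans_le (hX (x i) (y i))
  rwa [hsplit (by positivity) (norm_nonneg _)] at h

end Lp

/-- The right regular representation of `G` on `ℓ ^ p(G; X)`. -/
noncomputable def rightRegular (G X : Type*) [Group G] [NormedAddCommGroup X] [NormedSpace ℝ X]
    {p : ENNReal} [Fact (1 ≤ p)] (hp : 0 < p.toReal) :
    G →* (lp (fun _ : G => X) p →ₗᵢ[ℝ] lp (fun _ : G => X) p) where
  toFun g :=
    { toFun f := ⟨fun x => f (x * g),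
        memℓp_gen (((lp.memℓp f).summable hp).comp_injective (mul_left_injective g))⟩
      map_add' _ _ := rfl
      map_smul' _ _ := rfl
      norm_map' f := by
        rw [lp.norm_eq_tsum_rpow hp, lp.norm_eq_tsum_rpow hp]
        exact congrArg (· ^ (1 / p.toReal)) ((Equiv.mulRight g).tsum_eq (‖f ·‖ ^ p.toReal)) }
  map_one' := by ext f x; exact congrArg f (mul_one x)
  map_mul' g h := by ext f x; exact congrArg f (mul_assoc x g h).symm

theorem hasSum_norm_rightRegular_sub {G X : Type*} [Group G] [NormedAddCommGroup X]
    [NormedSpace ℝ X] {p : ENNReal} [Fact (1 ≤ p)] (hp : 0 < p.toReal) (g : G)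
    (v : lp (fun _ : G => X) p) :
    HasSum (fun x => ‖v (x * g) - v x‖ ^ p.toReal) (‖rightRegular G X hp g v - v‖ ^ p.toReal) :=
  lp.hasSum_norm hp (rightRegular G X hp g v - v)

/-! ### Commutators of isometries -/

section Isometries

theorem semiconjBy_pow_pow {M : Type*} [Monoid M] {a b c : M} (h : SemiconjBy a b (c * b))
    (hac : Commute a c) (hbc : Commute b c) (s t : ℕ) :
    SemiconjBy (a ^ s) (b ^ t) (c ^ (s * t) * b ^ t) := by
  have hpow_right : SemiconjBy a (b ^ t) (c ^ t * b ^ t) := by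
    rw [← hbc.symm.mul_pow]
    exact h.pow_right t
  induction s with
  | zero => simp
  | succ s ih =>
    rw [pow_succ', add_one_mul, pow_add, mul_assoc]
    exact ((hac.pow_right _).semiconjBy.mul_right hpow_right).mul_left ih

variable {Y : Type*} [NormedAddCommGroup Y] [NormedSpace ℝ Y] {A B C : Y →ₗᵢ[ℝ] Y}

theorem norm_mul_apply_sub_le (S T : Y →ₗᵢ[ℝ] Y) (v : Y) :
    ‖(S * T) v - v‖ ≤ ‖S v - v‖ + ‖T v - v‖ :=
  calc ‖(S * T) v - v‖ = ‖S (T v - v) + (S v - v)‖ := by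
        rw [map_sub, sub_add_sub_cancel]; rfl
    _ ≤ ‖S v - v‖ + ‖T v - v‖ := by
        refine (norm_add_le _ _).trans_eq ?_
        rw [S.norm_map, add_comm]

theorem norm_pow_apply_sub_le (T : Y →ₗᵢ[ℝ] Y) (k : ℕ) (v : Y) :
    ‖(T ^ k) v - v‖ ≤ k * ‖T v - v‖ := by
  induction k with
  | zero => simp
  | succ k ih =>
    rw [pow_succ, Nat.cast_succ, add_one_mul]
    exact (norm_mul_apply_sub_le _ _ v).trans (by gcongr)

theorem norm_apply_sub_le_of_semiconjBy (h : SemiconjBy A B (C * B)) (hC : Commute (B * A) C)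
    (v : Y) : ‖C v - v‖ ≤ 2 * (‖A v - v‖ + ‖B v - v‖) := by
  have hBA : B (A (C v)) = A (B v) := by
    change (B * A * C) v = (A * B) v
    rw [hC.eq, h.eq, mul_assoc]
  calc ‖C v - v‖ = ‖B (A (C v - v))‖ := by rw [B.norm_map, A.norm_map]
    _ = ‖(A (B v - v) - (B v - v)) - (B (A v - v) - (A v - v))‖ := by
        simp only [map_sub, hBA]; congr 1; abel
    _ ≤ (‖B v - v‖ + ‖B v - v‖) + (‖A v - v‖ + ‖A v - v‖) := by
        refine (norm_sub_le _ _).trans (add_le_add ?_ ?_)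
        · exact (norm_sub_le _ _).trans_eq (by rw [A.norm_map])
        · exact (norm_sub_le _ _).trans_eq (by rw [B.norm_map])
    _ = 2 * (‖A v - v‖ + ‖B v - v‖) := by ring

theorem norm_pow_two_pow_apply_sub_le (h : SemiconjBy A B (C * B)) (hA : Commute A C)
    (hB : Commute B C) (m : ℕ) (v : Y) :
    ‖(C ^ 2 ^ m) v - v‖ ≤ 4 * √2 ^ m * (‖A v - v‖ + ‖B v - v‖) := by
  have hpow : 2 ^ (m / 2) * 2 ^ (m - m / 2) = 2 ^ m := by rw [← pow_add]; congr 1; omega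
  have hcomm := norm_apply_sub_le_of_semiconjBy
    (semiconjBy_pow_pow h hA hB (2 ^ (m / 2)) (2 ^ (m - m / 2)))
    ((hB.pow_pow _ _).mul_left (hA.pow_pow _ _)) v
  rw [hpow] at hcomm
  have hsqrt {j : ℕ} (hj : 2 * j ≤ m + 1) : ((2 ^ j : ℕ) : ℝ) ≤ 2 * √2 ^ m :=
    calc ((2 ^ j : ℕ) : ℝ) = √2 ^ (2 * j) := by
          rw [← two_pow_eq_sqrt_two_pow, Nat.cast_pow, Nat.cast_ofNat]
      _ ≤ √2 ^ (m + 1) := pow_le_pow_right₀ (Real.one_le_sqrt.2 one_le_two) hj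
      _ ≤ 2 * √2 ^ m := by
          rw [pow_succ']
          gcongr
          exact (Real.sqrt_le_left two_pos.le).2 (by norm_num)
  calc ‖(C ^ 2 ^ m) v - v‖
      ≤ 2 * (2 * √2 ^ m * ‖A v - v‖ + 2 * √2 ^ m * ‖B v - v‖) := by
        refine hcomm.trans ?_
        gcongr
        · exact (norm_pow_apply_sub_le A _ v).trans (by gcongr; exact hsqrt (by omega))
        · exact (norm_pow_apply_sub_le B _ v).trans (by gcongr; exact hsqrt (by omega))
    _ = 4 * √2 ^ m * (‖A v - v‖ + ‖B v - v‖) := by ring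

end Isometries

/-! ### Dyadic averages -/

section DyadicAverages

variable {Y : Type*} [NormedAddCommGroup Y] [NormedSpace ℝ Y] {A B C : Y →ₗᵢ[ℝ] Y} {p q κ : ℝ}

/-- The average of `C ^ j v` over `j < 2 ^ m`, computed by repeated halving. -/
noncomputable def dyadicAverage (C : Y →ₗᵢ[ℝ] Y) : ℕ → Y → Y
  | 0, v => v
  | m + 1, v => (1 / 2 : ℝ) • (dyadicAverage C m v + (C ^ 2 ^ m) (dyadicAverage C m v))

/-- The difference between the average over `j < 2 ^ m` and that over `2 ^ m ≤ j < 2 ^ (m + 1)`. -/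
noncomputable def dyadicDiff (C : Y →ₗᵢ[ℝ] Y) (m : ℕ) (v : Y) : Y :=
  dyadicAverage C m v - (C ^ 2 ^ m) (dyadicAverage C m v)

theorem apply_pow_apply_of_commute (h : Commute A C) (k : ℕ) (v : Y) :
    A ((C ^ k) v) = (C ^ k) (A v) :=
  DFunLike.congr_fun (h.pow_right k).eq v

theorem apply_dyadicAverage (h : Commute A C) (m : ℕ) (v : Y) :
    A (dyadicAverage C m v) = dyadicAverage C m (A v) := by
  induction m with
  | zero => rfl
  | succ m ih => simp only [dyadicAverage, map_smul, map_add, apply_pow_apply_of_commute h, ih]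

theorem apply_dyadicDiff (h : Commute A C) (m : ℕ) (v : Y) :
    A (dyadicDiff C m v) = dyadicDiff C m (A v) := by
  simp only [dyadicDiff, map_sub, apply_pow_apply_of_commute h, apply_dyadicAverage h]

theorem dyadicAverage_sub (m : ℕ) (v w : Y) :
    dyadicAverage C m (v - w) = dyadicAverage C m v - dyadicAverage C m w := by
  induction m with
  | zero => rfl
  | succ m ih => simp only [dyadicAverage, ih, map_sub]; module

theorem dyadicDiff_sub (m : ℕ) (v w : Y) :
    dyadicDiff C m (v - w) = dyadicDiff C m v - dyadicDiff C m w := by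
  simp only [dyadicDiff, dyadicAverage_sub, map_sub]; abel

theorem dyadicDiff_apply_sub (h : Commute A C) (m : ℕ) (v : Y) :
    dyadicDiff C m (A v - v) = A (dyadicDiff C m v) - dyadicDiff C m v := by
  rw [dyadicDiff_sub, apply_dyadicDiff h]

theorem dyadicAverage_sub_dyadicAverage_succ (m : ℕ) (v : Y) :
    dyadicAverage C m v - dyadicAverage C (m + 1) v = (1 / 2 : ℝ) • dyadicDiff C m v := by
  simp only [dyadicAverage, dyadicDiff]
  module

theorem norm_dyadicAverage_succ (m : ℕ) (v : Y) :
    ‖dyadicAverage C (m + 1) v‖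
      = ‖dyadicAverage C m v + (C ^ 2 ^ m) (dyadicAverage C m v)‖ / 2 := by
  rw [dyadicAverage, norm_smul, Real.norm_of_nonneg (by norm_num), one_div_mul_eq_div]

theorem norm_dyadicAverage_succ_le (m : ℕ) (v : Y) :
    ‖dyadicAverage C (m + 1) v‖ ≤ ‖dyadicAverage C m v‖ := by
  have := norm_add_le (dyadicAverage C m v) ((C ^ 2 ^ m) (dyadicAverage C m v))
  rw [LinearIsometry.norm_map] at this
  rw [norm_dyadicAverage_succ]
  linarith

theorem norm_dyadicAverage_le (m : ℕ) (v : Y) : ‖dyadicAverage C m v‖ ≤ ‖v‖ :=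
  antitone_nat_of_succ_le (f := fun m => ‖dyadicAverage C m v‖)
    (fun m => norm_dyadicAverage_succ_le m v) m.zero_le

theorem norm_dyadicDiff_le (m : ℕ) (v : Y) : ‖dyadicDiff C m v‖ ≤ 2 * ‖v‖ := by
  have := norm_sub_le (dyadicAverage C m v) ((C ^ 2 ^ m) (dyadicAverage C m v))
  rw [LinearIsometry.norm_map] at this
  exact this.trans (by linarith [norm_dyadicAverage_le (C := C) m v])

theorem norm_sub_dyadicAverage_le (n : ℕ) (v : Y) :
    ‖v - dyadicAverage C n v‖ ≤ 1 / 2 * ∑ m ∈ Finset.range n, ‖dyadicDiff C m v‖ := by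
  induction n with
  | zero => simp [dyadicAverage]
  | succ n ih =>
    have := norm_sub_le_norm_sub_add_norm_sub v (dyadicAverage C n v) (dyadicAverage C (n + 1) v)
    rw [dyadicAverage_sub_dyadicAverage_succ, norm_smul, Real.norm_of_nonneg (by norm_num)] at this
    rw [Finset.sum_range_succ, mul_add]
    linarith

theorem norm_apply_dyadicAverage_succ_sub_le (h : Commute A C) (m : ℕ) (v : Y) :
    ‖A (dyadicAverage C (m + 1) v) - dyadicAverage C (m + 1) v‖
      ≤ ‖A (dyadicAverage C m v) - dyadicAverage C m v‖ := by
  have hA : A (dyadicAverage C (m + 1) v) - dyadicAverage C (m + 1) v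
      = dyadicAverage C (m + 1) (A v - v) := by rw [apply_dyadicAverage h, dyadicAverage_sub]
  have hA' : A (dyadicAverage C m v) - dyadicAverage C m v = dyadicAverage C m (A v - v) := by
    rw [apply_dyadicAverage h, dyadicAverage_sub]
  rw [hA, hA']
  exact norm_dyadicAverage_succ_le m _

theorem norm_pow_apply_dyadicAverage_sub_le {n k : ℕ} (hk : k < 2 ^ n) (v : Y) :
    ‖(C ^ k) (dyadicAverage C n v) - dyadicAverage C n v‖
      ≤ ∑ m ∈ Finset.range n, ‖dyadicDiff C m v‖ := by
  induction n generalizing k with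
  | zero =>
    obtain rfl : k = 0 := by simpa using hk
    simp
  | succ n ih =>
    have hsucc (j : ℕ) := norm_apply_dyadicAverage_succ_sub_le (Commute.pow_self C j) n v
    rw [Finset.sum_range_succ]
    rcases lt_or_ge k (2 ^ n) with h | h
    · exact (hsucc k).trans (le_add_of_le_of_nonneg (ih h) (norm_nonneg _))
    · obtain ⟨j, rfl⟩ := Nat.exists_eq_add_of_le' h
      rw [pow_add]
      refine (norm_mul_apply_sub_le _ _ _).trans (add_le_add ?_ ?_)
      · exact (hsucc j).trans (ih (by rw [pow_succ] at hk; omega))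
      · exact (hsucc (2 ^ n)).trans_eq (norm_sub_rev _ _)

theorem norm_pow_apply_sub_le_sum_dyadicDiff {n k : ℕ} (hk : k < 2 ^ n) (v : Y) :
    ‖(C ^ k) v - v‖ ≤ 2 * ∑ m ∈ Finset.range n, ‖dyadicDiff C m v‖ :=
  calc ‖(C ^ k) v - v‖
      = ‖(C ^ k) (v - dyadicAverage C n v) - (v - dyadicAverage C n v)
          + ((C ^ k) (dyadicAverage C n v) - dyadicAverage C n v)‖ := by
        rw [map_sub]; congr 1; abel
    _ ≤ ‖v - dyadicAverage C n v‖ + ‖v - dyadicAverage C n v‖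
          + ‖(C ^ k) (dyadicAverage C n v) - dyadicAverage C n v‖ := by
        refine norm_add_le_of_le ((norm_sub_le _ _).trans_eq ?_) le_rfl
        rw [LinearIsometry.norm_map]
    _ ≤ 2 * ∑ m ∈ Finset.range n, ‖dyadicDiff C m v‖ := by
        linarith [norm_sub_dyadicAverage_le (C := C) n v,
          norm_pow_apply_dyadicAverage_sub_le (C := C) hk v]

theorem sum_norm_dyadicDiff_rpow_le (hY : TwoPointConvex Y p q κ) (hp : p ≠ 0) (hκ : 0 < κ)
    (N : ℕ) (v : Y) : ∑ m ∈ Finset.range N, ‖dyadicDiff C m v‖ ^ q ≤ ‖v‖ ^ q / κ := by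
  rw [le_div_iff₀' hκ, Finset.mul_sum]
  have hstep (m : ℕ) : κ * ‖dyadicDiff C m v‖ ^ q
      ≤ ‖dyadicAverage C m v‖ ^ q - ‖dyadicAverage C (m + 1) v‖ ^ q := by
    rw [norm_dyadicAverage_succ]
    exact le_sub_left_of_add_le (hY.of_norm_eq hp (LinearIsometry.norm_map _ _).symm)
  refine (Finset.sum_le_sum fun m _ => hstep m).trans ?_
  rw [Finset.sum_range_sub']
  exact sub_le_self _ (by positivity)

/-- The identity behind this is `D_{m+1} = (1 + C ^ 2ᵐ)² D_m / 2`. -/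
theorem norm_dyadicDiff_le_half_norm_succ_add (m : ℕ) (v : Y) :
    ‖dyadicDiff C m v‖ ≤ 1 / 2 * ‖dyadicDiff C (m + 1) v‖
      + ‖(C ^ 2 ^ m) (dyadicDiff C m v) - dyadicDiff C m v‖ := by
  set S := C ^ 2 ^ m with hS
  set u := S (dyadicDiff C m v) - dyadicDiff C m v with hu
  have hsq : C ^ 2 ^ (m + 1) = S * S := by rw [pow_succ, mul_two, pow_add]
  have hdiff : dyadicDiff C m v
      = (1 / 2 : ℝ) • dyadicDiff C (m + 1) v - (1 / 4 : ℝ) • (S u + (3 : ℝ) • u) := by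
    simp only [hu, dyadicDiff, dyadicAverage, hsq, ← hS, LinearIsometry.coe_mul,
      Function.comp_apply, map_add, map_sub, map_smul]
    module
  calc ‖dyadicDiff C m v‖
      = ‖(1 / 2 : ℝ) • dyadicDiff C (m + 1) v - (1 / 4 : ℝ) • (S u + (3 : ℝ) • u)‖ := by
        rw [← hdiff]
    _ ≤ 1 / 2 * ‖dyadicDiff C (m + 1) v‖ + 1 / 4 * (‖u‖ + 3 * ‖u‖) := by
        refine norm_sub_le_of_le ?_ ?_
        · rw [norm_smul_of_nonneg (by norm_num)]
        · rw [norm_smul_of_nonneg (by norm_num)]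
          gcongr
          refine (norm_add_le _ _).trans_eq ?_
          rw [S.norm_map, norm_smul_of_nonneg (by norm_num)]
    _ = 1 / 2 * ‖dyadicDiff C (m + 1) v‖ + ‖u‖ := by ring

end DyadicAverages

section CommutatorRelation

variable {Y : Type*} [NormedAddCommGroup Y] [NormedSpace ℝ Y] {A B C : Y →ₗᵢ[ℝ] Y} {p q κ : ℝ}

theorem norm_dyadicDiff_div_sqrt_two_pow_le (h : SemiconjBy A B (C * B)) (hA : Commute A C)
    (hB : Commute B C) (m : ℕ) (v : Y) :
    ‖dyadicDiff C m v‖ / √2 ^ m ≤ (√2)⁻¹ * (‖dyadicDiff C (m + 1) v‖ / √2 ^ (m + 1))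
      + 4 * (‖dyadicDiff C m (A v - v)‖ + ‖dyadicDiff C m (B v - v)‖) := by
  have hcomm := norm_pow_two_pow_apply_sub_le h hA hB m (dyadicDiff C m v)
  rw [← dyadicDiff_apply_sub hA, ← dyadicDiff_apply_sub hB] at hcomm
  have hsqrt : (√2)⁻¹ * (‖dyadicDiff C (m + 1) v‖ / √2 ^ (m + 1)) * √2 ^ m
      = 1 / 2 * ‖dyadicDiff C (m + 1) v‖ := by
    field_simp
    rw [pow_succ]
    linear_combination (-‖dyadicDiff C (m + 1) v‖ * √2 ^ m) *
      Real.mul_self_sqrt (zero_le_two : (0 : ℝ) ≤ 2)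
  rw [div_le_iff₀ (by positivity), add_mul, hsqrt]
  linarith [norm_dyadicDiff_le_half_norm_succ_add (C := C) m v]

theorem sum_norm_dyadicDiff_div_sqrt_two_pow_rpow_le (hq : 1 ≤ q) (hp : p ≠ 0) (hκ : 0 < κ)
    (hY : TwoPointConvex Y p q κ) (h : SemiconjBy A B (C * B)) (hA : Commute A C)
    (hB : Commute B C) (v : Y) (N : ℕ) :
    ∑ m ∈ Finset.range N, (‖dyadicDiff C m v‖ / √2 ^ m) ^ q
      ≤ 32 ^ q * ((‖A v - v‖ ^ q + ‖B v - v‖ ^ q) / κ) := by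
  have : 0 ≤ q := by linarith
  have hsqrt : 1 < √2 := Real.lt_sqrt_of_sq_lt (by norm_num)
  have hlim : Tendsto (fun m => ‖dyadicDiff C m v‖ / √2 ^ m) atTop (𝓝 0) :=
    squeeze_zero (fun m => by positivity)
      (fun m => by gcongr; exact norm_dyadicDiff_le m v)
      (tendsto_const_nhds.div_atTop (tendsto_pow_atTop_atTop_of_one_lt hsqrt))
  have hforcing (N : ℕ) : ∑ m ∈ Finset.range N,
      (4 * (‖dyadicDiff C m (A v - v)‖ + ‖dyadicDiff C m (B v - v)‖)) ^ q
        ≤ 4 ^ q * (2 ^ q * ((‖A v - v‖ ^ q + ‖B v - v‖ ^ q) / κ)) :=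
    calc _ ≤ ∑ m ∈ Finset.range N, 4 ^ q * (2 ^ q *
            (‖dyadicDiff C m (A v - v)‖ ^ q + ‖dyadicDiff C m (B v - v)‖ ^ q)) :=
          Finset.sum_le_sum fun m _ => by
            rw [Real.mul_rpow (by norm_num) (by positivity)]
            gcongr
            exact add_rpow_le_two_rpow_mul hq (norm_nonneg _) (norm_nonneg _)
      _ ≤ _ := by
          rw [← Finset.mul_sum, ← Finset.mul_sum, Finset.sum_add_distrib, add_div]
          gcongr <;> exact sum_norm_dyadicDiff_rpow_le hY hp hκ N _
  have hrate : 0 < 1 - (√2)⁻¹ := sub_pos.2 (inv_lt_one_of_one_lt₀ hsqrt)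
  calc ∑ m ∈ Finset.range N, (‖dyadicDiff C m v‖ / √2 ^ m) ^ q
      ≤ ((1 - (√2)⁻¹)⁻¹) ^ q * (4 ^ q * (2 ^ q * ((‖A v - v‖ ^ q + ‖B v - v‖ ^ q) / κ))) :=
        sum_rpow_le_of_le_mul_succ_add_s11 hq (by positivity) (inv_lt_one_of_one_lt₀ hsqrt)
          (fun m => by positivity) (fun m => by positivity) hlim
          (fun m => norm_dyadicDiff_div_sqrt_two_pow_le h hA hB m v) hforcing N
    _ ≤ 4 ^ q * (4 ^ q * (2 ^ q * ((‖A v - v‖ ^ q + ‖B v - v‖ ^ q) / κ))) := by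
        gcongr
        exact inv_one_sub_inv_sqrt_two_le
    _ = 32 ^ q * ((‖A v - v‖ ^ q + ‖B v - v‖ ^ q) / κ) := by
        rw [← mul_assoc, ← mul_assoc, ← Real.mul_rpow, ← Real.mul_rpow] <;> norm_num

theorem sum_rpow_mul_norm_pow_apply_sub_rpow_le_sum_dyadicDiff (hq : 0 ≤ q) (C : Y →ₗᵢ[ℝ] Y) (v : Y)
    (M : ℕ) :
    ∑ k ∈ Finset.range (2 ^ M - 1), ((k : ℝ) + 1) ^ (-1 - q / 2) * ‖(C ^ (k + 1)) v - v‖ ^ q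
      ≤ 2 ^ q * ∑ n ∈ Finset.range M,
        ((∑ m ∈ Finset.range (n + 1), ‖dyadicDiff C m v‖) / √2 ^ n) ^ q := by
  rw [Finset.mul_sum]
  refine sum_range_le_of_le_dyadic (fun n k hnk hkn => ?_) M
  set U := ∑ m ∈ Finset.range (n + 1), ‖dyadicDiff C m v‖
  have hU0 : 0 ≤ U := Finset.sum_nonneg fun m _ => norm_nonneg _
  calc ((k : ℝ) + 1) ^ (-1 - q / 2) * ‖(C ^ (k + 1)) v - v‖ ^ q
      ≤ ((2 : ℝ) ^ n)⁻¹ * ((√2 ^ n) ^ q)⁻¹ * (2 * U) ^ q := by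
        gcongr
        · exact rpow_neg_one_sub_half_le hq (by exact_mod_cast hnk)
        · exact norm_pow_apply_sub_le_sum_dyadicDiff hkn v
    _ = ((2 : ℝ) ^ n)⁻¹ * (2 ^ q * (U / √2 ^ n) ^ q) := by
        rw [Real.mul_rpow two_pos.le hU0, Real.div_rpow hU0 (by positivity)]
        ring

theorem sum_rpow_mul_norm_pow_apply_sub_rpow_le (hq : 1 ≤ q) (hp : p ≠ 0) (hκ : 0 < κ)
    (hY : TwoPointConvex Y p q κ) (h : SemiconjBy A B (C * B)) (hA : Commute A C)
    (hB : Commute B C) (v : Y) (N : ℕ) :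
    ∑ k ∈ Finset.range N, ((k : ℝ) + 1) ^ (-1 - q / 2) * ‖(C ^ (k + 1)) v - v‖ ^ q
      ≤ 256 ^ q * ((‖A v - v‖ ^ q + ‖B v - v‖ ^ q) / κ) := by
  have hN : N ≤ 2 ^ N - 1 := Nat.le_sub_one_of_lt N.lt_two_pow_self
  have hsqrt : 1 < √2 := Real.lt_sqrt_of_sq_lt (by norm_num)
  have hrate : 0 < 1 - (√2)⁻¹ := sub_pos.2 (inv_lt_one_of_one_lt₀ hsqrt)
  calc ∑ k ∈ Finset.range N, ((k : ℝ) + 1) ^ (-1 - q / 2) * ‖(C ^ (k + 1)) v - v‖ ^ q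
      ≤ ∑ k ∈ Finset.range (2 ^ N - 1),
          ((k : ℝ) + 1) ^ (-1 - q / 2) * ‖(C ^ (k + 1)) v - v‖ ^ q :=
        Finset.sum_le_sum_of_subset_of_nonneg (Finset.range_mono hN) fun k _ _ => by positivity
    _ ≤ 2 ^ q * ∑ n ∈ Finset.range N,
          ((∑ m ∈ Finset.range (n + 1), ‖dyadicDiff C m v‖) / √2 ^ n) ^ q :=
        sum_rpow_mul_norm_pow_apply_sub_rpow_le_sum_dyadicDiff (by linarith) C v N
    _ ≤ 2 ^ q * (((1 - (√2)⁻¹)⁻¹) ^ q * ∑ n ∈ Finset.range N,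
          (‖dyadicDiff C n v‖ / √2 ^ n) ^ q) := by
        gcongr
        exact hardy_sum_partialSum_div_pow_rpow_le hq hsqrt (fun _ => norm_nonneg _) N
    _ ≤ 2 ^ q * (4 ^ q * (32 ^ q * ((‖A v - v‖ ^ q + ‖B v - v‖ ^ q) / κ))) := by
        gcongr
        · exact inv_one_sub_inv_sqrt_two_le
        · exact sum_norm_dyadicDiff_div_sqrt_two_pow_rpow_le hq hp hκ hY h hA hB v N
    _ = 256 ^ q * ((‖A v - v‖ ^ q + ‖B v - v‖ ^ q) / κ) := by
        rw [← mul_assoc, ← mul_assoc, ← Real.mul_rpow, ← Real.mul_rpow] <;> norm_num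

end CommutatorRelation

/-! ### Vertical versus horizontal differences -/

section Group

variable {G X : Type*} [Group G] [NormedAddCommGroup X] [NormedSpace ℝ X]

theorem semiconjBy_commutatorElement_mul (a b : G) : SemiconjBy a b (⁅a, b⁆ * b) := by
  rw [SemiconjBy, commutatorElement_def]
  group

theorem tsum_norm_sub_rpow_eq {p : ENNReal} [Fact (1 ≤ p)] (hp : 0 < p.toReal) (g : G)
    (v : lp (fun _ : G => X) p) (q : ℝ) :
    (∑' x, ‖v (x * g) - v x‖ ^ p.toReal) ^ (q / p.toReal)
      = ‖rightRegular G X hp g v - v‖ ^ q := by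
  rw [(hasSum_norm_rightRegular_sub hp g v).tsum_eq, rpow_rpow_div hp.ne' (norm_nonneg _)]

theorem sum_rpow_mul_tsum_norm_sub_rpow_le {a b : G} {q κ : ℝ} {p : ENNReal} [Fact (1 ≤ p)]
    (hp : 0 < p.toReal) (hq : 1 ≤ q) (hpq : p.toReal ≤ q) (hκ : 0 < κ)
    (hX : TwoPointConvex X p.toReal q κ) (ha : Commute a ⁅a, b⁆) (hb : Commute b ⁅a, b⁆)
    (v : lp (fun _ : G => X) p) (N : ℕ) :
    ∑ k ∈ Finset.range N, ((k : ℝ) + 1) ^ (-1 - q / 2) *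
        (∑' x, ‖v (x * ⁅a, b⁆ ^ (k + 1)) - v x‖ ^ p.toReal) ^ (q / p.toReal)
      ≤ 256 ^ q / κ * (∑' x, (‖v (x * a) - v x‖ ^ p.toReal + ‖v (x * b) - v x‖ ^ p.toReal))
        ^ (q / p.toReal) := by
  set R := rightRegular G X hp
  have hab : SemiconjBy (R a) (R b) (R ⁅a, b⁆ * R b) := by
    simpa only [map_mul] using (semiconjBy_commutatorElement_mul a b).map R
  simp only [tsum_norm_sub_rpow_eq hp, map_pow]
  calc _ ≤ 256 ^ q * ((‖R a v - v‖ ^ q + ‖R b v - v‖ ^ q) / κ) :=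
        sum_rpow_mul_norm_pow_apply_sub_rpow_le hq hp.ne' hκ (twoPointConvex_lp hp hpq hκ.le hX)
          hab (ha.map R) (hb.map R) v N
    _ = 256 ^ q / κ * ((‖R a v - v‖ ^ p.toReal) ^ (q / p.toReal)
          + (‖R b v - v‖ ^ p.toReal) ^ (q / p.toReal)) := by
        rw [rpow_rpow_div hp.ne' (norm_nonneg _), rpow_rpow_div hp.ne' (norm_nonneg _)]
        ring
    _ ≤ 256 ^ q / κ * (‖R a v - v‖ ^ p.toReal + ‖R b v - v‖ ^ p.toReal) ^ (q / p.toReal) := by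
        gcongr
        exact Real.add_rpow_le_rpow_add (by positivity) (by positivity) ((one_le_div hp).2 hpq)
    _ = _ := by
        rw [((hasSum_norm_rightRegular_sub hp a v).add
          (hasSum_norm_rightRegular_sub hp b v)).tsum_eq]

end Group

theorem global_pq_poincare_general {η p q : ℝ} (hη : 0 < η) (hη1 : η ≤ 1) (hq : 2 ≤ q)
    (hp : 1 < p) (hpq : p ≤ q) :
    ∃ K : ℝ, 0 < K ∧ ∀ (G : Type*) [Group G] (a b : G), Commute a ⁅a, b⁆ → Commute b ⁅a, b⁆ →
      ∀ (X : Type*) [NormedAddCommGroup X] [NormedSpace ℝ X], HasPowerTypeConvexity X η q →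
        ∀ f : G → X, (Summable fun x => ‖f x‖ ^ p) →
          (Summable fun k : ℕ => ((k : ℝ) + 1) ^ (-1 - q / 2) *
            (∑' x, ‖f (x * ⁅a, b⁆ ^ (k + 1)) - f x‖ ^ p) ^ (q / p)) ∧
          (∑' k : ℕ, ((k : ℝ) + 1) ^ (-1 - q / 2) *
              (∑' x, ‖f (x * ⁅a, b⁆ ^ (k + 1)) - f x‖ ^ p) ^ (q / p)) ^ (1 / q)
            ≤ K * (∑' x, (‖f (x * a) - f x‖ ^ p + ‖f (x * b) - f x‖ ^ p)) ^ (1 / p) := by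
  set κ := (min p 2 - 1) / 8 * (η / 8) ^ q
  have hκ : 0 < κ := by
    have : 0 < min p 2 - 1 := sub_pos.2 (lt_min hp one_lt_two)
    positivity
  refine ⟨(256 ^ q / κ) ^ (1 / q), by positivity, fun G _ a b ha hb X _ _ hX f hf => ?_⟩
  have hp0 : 0 < p := by linarith
  have hq0 : 0 < q := by linarith
  have : Fact (1 ≤ ENNReal.ofReal p) := ⟨ENNReal.one_le_ofReal.2 hp.le⟩
  have hpr : (ENNReal.ofReal p).toReal = p := ENNReal.toReal_ofReal hp0.le
  let v : lp (fun _ : G => X) (ENNReal.ofReal p) := ⟨f, memℓp_gen (by rwa [hpr])⟩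
  have hpartial := sum_rpow_mul_tsum_norm_sub_rpow_le (q := q) (by rwa [hpr]) (by linarith)
    (by rwa [hpr]) hκ (by rw [hpr]; exact hX.twoPointConvex hη.le hη1 hq hp.le) ha hb v
  simp only [hpr, v] at hpartial
  have hterm (k : ℕ) : 0 ≤ ((k : ℝ) + 1) ^ (-1 - q / 2) *
      (∑' x, ‖f (x * ⁅a, b⁆ ^ (k + 1)) - f x‖ ^ p) ^ (q / p) := by positivity
  refine ⟨summable_of_sum_range_le hterm hpartial, ?_⟩
  rw [one_div q, Real.rpow_inv_le_iff_of_pos (tsum_nonneg hterm) (by positivity) hq0,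
    Real.mul_rpow (by positivity) (by positivity), Real.rpow_inv_rpow (by positivity) hq0.ne',
    ← Real.rpow_mul (by positivity), one_div_mul_eq_div]
  exact Real.tsum_le_of_sum_range_le hterm hpartial

namespace DH

theorem commute_gA_gC : Commute gA gC := by
  simp [Commute, SemiconjBy, gC, gA, gB, mul_def, inv_def]

theorem commute_gB_gC : Commute gB gC := by
  simp [Commute, SemiconjBy, gC, gA, gB, mul_def, inv_def]

end DH

open DH in
/-- Theorem 3.3: the global `(p,q)` vertical-versus-horizontal Poincaré inequality
on the discrete Heisenberg group, for finitely supported functions. -/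
theorem global_pq_poincare (η : ℝ) (hη : η ∈ Set.Ioo (0 : ℝ) 1)
    (q p : ℝ) (hq : 2 ≤ q) (hp : 1 < p) (hpq : p ≤ q) :
    ∃ K : ℝ, 0 < K ∧
      ∀ (X : Type) [NormedAddCommGroup X] [NormedSpace ℝ X] [CompleteSpace X],
        (∀ ε ∈ Set.Ioo (0 : ℝ) 1, ∀ x y : X, ‖x‖ = 1 → ‖y‖ = 1 → ε ≤ ‖x - y‖ →
          ‖x + y‖ ≤ 2 * (1 - (η * ε) ^ q)) →
        ∀ f : DH → X, (Function.support f).Finite →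
          (∑' k : ℕ, ((k : ℝ) + 1) ^ (-1 - q / 2) *
              (∑' x : DH, ‖f (x * gC ^ (k + 1)) - f x‖ ^ p) ^ (q / p)) ^ (1 / q) ≤
            K * (∑' x : DH,
              (‖f (x * gA) - f x‖ ^ p + ‖f (x * gB) - f x‖ ^ p)) ^ (1 / p) := by
  obtain ⟨K, hK, hpoincare⟩ := global_pq_poincare_general hη.1 hη.2.le hq hp hpq
  refine ⟨K, hK, fun X _ _ _ hX f hf => ?_⟩
  have hsupp : (fun x => ‖f x‖ ^ p).support ⊆ f.support := fun x hx hfx => hx <| by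
    simp [hfx, (by linarith : p ≠ 0)]
  exact (hpoincare DH gA gB commute_gA_gC commute_gB_gC X hX f
    (summable_of_hasFiniteSupport (hf.subset hsupp))).2
end
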